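/- arXiv:2007.05935 — 3 statements merged into one kernel-verified Lean document; each statement's English description precedes it below -/
import Mathlib

section
/- For every infinite cardinal κ, the relation κ⁺ ↛^poly (κ⁺-cl)²_{2-bdd} holds; that is, there exists a normal 2-bounded coloring f : [κ⁺]² → κ⁺ such that no closed subset of κ⁺ of order type κ⁺ (equivalently, no club subset of κ⁺) is f-rainbow. -/
open Set Cardinal Ordinal

universe u

/-- `A` has order type `θ`: there is an order isomorphism from `Iio θ` onto `A`. -/
def HasOType (A : Set Ordinal.{u}) (θ : Ordinal.{u}) : Prop :=
  Nonempty (Set.Iio θ ≃o A)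

/-- The order type of `A` is at most `γ`: `A` order-embeds into `Iio γ`. -/
def OTypeLE (A : Set Ordinal.{u}) (γ : Ordinal.{u}) : Prop :=
  Nonempty (A ↪o Set.Iio γ)

/-- `A` is `f`-rainbow: `f` is injective on increasing pairs from `A`. -/
def IsRainbow (f : Ordinal → Ordinal → Ordinal) (A : Set Ordinal) : Prop :=
  ∀ α ∈ A, ∀ β ∈ A, ∀ γ ∈ A, ∀ δ ∈ A,
    α < β → γ < δ → f α β = f γ δ → α = γ ∧ β = δ

/-- `f` is a normal coloring on pairs below `κ`: equal colors force equal top points. -/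
def IsNormalColoring (f : Ordinal → Ordinal → Ordinal) (κ : Ordinal) : Prop :=
  ∀ α β γ δ : Ordinal, α < β → β < κ → γ < δ → δ < κ → f α β = f γ δ → β = δ

/-- `f` is 2-bounded: every fiber of `f` on pairs below `κ` has at most two elements. -/
def TwoBounded (f : Ordinal → Ordinal → Ordinal) (κ : Ordinal) : Prop :=
  ∀ ξ : Ordinal, {p : Ordinal × Ordinal | p.1 < p.2 ∧ p.2 < κ ∧ f p.1 p.2 = ξ}.encard ≤ 2

/-- `f` is `<ω`-bounded: every fiber of `f` on pairs below `κ` is finite. -/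
def FinBounded (f : Ordinal → Ordinal → Ordinal) (κ : Ordinal) : Prop :=
  ∀ ξ : Ordinal, {p : Ordinal × Ordinal | p.1 < p.2 ∧ p.2 < κ ∧ f p.1 p.2 = ξ}.Finite

/-- `f` is `ω`-bounded: every fiber of `f` on pairs below `κ` is countable. -/
def OmegaBounded (f : Ordinal → Ordinal → Ordinal) (κ : Ordinal) : Prop :=
  ∀ ξ : Ordinal, {p : Ordinal × Ordinal | p.1 < p.2 ∧ p.2 < κ ∧ f p.1 p.2 = ξ}.Countable

/-- `A` is a closed set of ordinals: any nonzero `α` below `sup A` which is the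
supremum of the elements of `A` below it belongs to `A`. -/
def IsClosedSet (A : Set Ordinal) : Prop :=
  ∀ α : Ordinal, α < sSup A → α ≠ 0 → sSup (A ∩ Set.Iio α) = α → α ∈ A

/-- `C` is club in `δ`: a subset of `δ`, unbounded in `δ`, and closed below `δ`. -/
def IsClubIn (C : Set Ordinal) (δ : Ordinal) : Prop :=
  C ⊆ Set.Iio δ ∧ (∀ α < δ, ∃ β ∈ C, α ≤ β) ∧
  ∀ α : Ordinal, α < δ → α ≠ 0 → sSup (C ∩ Set.Iio α) = α → α ∈ C

/-- `A` is stationary in `δ`: it meets every club in `δ`. -/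
def IsStationaryIn (A : Set Ordinal) (δ : Ordinal) : Prop :=
  ∀ C : Set Ordinal, IsClubIn C δ → (A ∩ C).Nonempty

/-- `f` is `<bd`-type bounded on pairs below `κ`: some `γ < bd` bounds the order
type of every color class `t_{ηβ} = {ξ < β | f ξ β = f η β}`. -/
def TypeBounded (f : Ordinal → Ordinal → Ordinal) (κ bd : Ordinal) : Prop :=
  ∃ γ < bd, ∀ η β : Ordinal, η < β → β < κ →
    OTypeLE {ξ : Ordinal | ξ < β ∧ f ξ β = f η β} γ

/-- `f` is `<bd`-type bounded relative to the set `A`. -/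
def TypeBoundedOn (f : Ordinal → Ordinal → Ordinal) (A : Set Ordinal) (bd : Ordinal) : Prop :=
  ∃ γ < bd, ∀ η ∈ A, ∀ β ∈ A, η < β →
    OTypeLE {ξ : Ordinal | ξ ∈ A ∧ ξ < β ∧ f ξ β = f η β} γ

universe v

/-!
Each `β < κ⁺` has only `κ` many pairs `α < γ` below it, so the triples `α < γ < β` can be indexed
by `κ` many families `p`, each selecting at most one pair for every `β`. Any such family yields a
normal 2-bounded coloring whose only coincidences are that `{α, β}` and `{γ, β}` get the same
color when `(α, γ)` is the pair selected for `β`. If each of these `κ` colorings had a rainbow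
club, the intersection of the `κ` clubs would still be a club of `κ⁺`, hence would contain some
`α < γ < β`; but the coloring whose family selects `(α, γ)` for `β` is not injective there.
-/

theorem exists_subset_range_of_lift_mk_le {α : Type u} {ι : Type v} [Nonempty α] {s : Set α}
    (h : lift.{v} #s ≤ lift.{u} #ι) : ∃ p : ι → α, s ⊆ range p := by
  obtain ⟨e⟩ := lift_mk_le'.1 h
  exact ⟨Function.extend e (↑) fun _ ↦ Classical.arbitrary α,
    fun x hx ↦ ⟨e ⟨x, hx⟩, e.injective.extend_apply _ _ _⟩⟩

theorem exists_prod_self_subset_range {α : Type u} {ι : Type v} [Nonempty α] [Infinite ι]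
    {s : Set α} (h : lift.{v} #s ≤ lift.{u} #ι) : ∃ p : ι → α × α, s ×ˢ s ⊆ range p := by
  refine exists_subset_range_of_lift_mk_le ?_
  calc lift.{v} #(s ×ˢ s) = lift.{v} #s * lift.{v} #s := by
        rw [← Cardinal.lift_mul, mul_def, mk_congr (Equiv.Set.prod s s)]
    _ ≤ lift.{u} #ι * lift.{u} #ι := mul_le_mul' h h
    _ = lift.{u} #ι := mul_eq_self (aleph0_le_lift.2 (aleph0_le_mk ι))

theorem exists_family_forall_lt_ord_succ_exists_eq_prodMk (ι : Type u) [Infinite ι] :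
    ∃ p : ι → Ordinal.{u} → Ordinal.{u} × Ordinal.{u},
      ∀ β < (Order.succ #ι).ord, ∀ α < β, ∀ γ < β, ∃ i, p i β = (α, γ) := by
  choose! p hp using fun β (hβ : β < (Order.succ #ι).ord) ↦
    exists_prod_self_subset_range (ι := ι) (s := Iio β) <| by
      rw [Cardinal.mk_Iio_ordinal, Cardinal.lift_lift, Cardinal.lift_le]
      exact Order.lt_succ_iff.1 (lt_ord.1 hβ)
  exact ⟨fun i β ↦ p β i, fun β hβ α hα γ hγ ↦ hp β hβ ⟨hα, hγ⟩⟩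

theorem exists_lt_lt_of_isCofinal {α : Type u} [LinearOrder α] [Nonempty α] [NoMaxOrder α]
    {s : Set α} (hs : IsCofinal s) : ∃ a ∈ s, ∃ b ∈ s, ∃ c ∈ s, a < b ∧ b < c := by
  have exists_gt : ∀ x, ∃ y ∈ s, x < y := not_bddAbove_iff.1 (not_bddAbove_iff_isCofinal.2 hs)
  obtain ⟨a, ha⟩ := hs.nonempty
  obtain ⟨b, hb, hab⟩ := exists_gt a
  obtain ⟨c, hc, hbc⟩ := exists_gt b
  exact ⟨a, ha, b, hb, c, hc, hab, hbc⟩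

theorem cof_Iio_ord_of_isRegular {c : Cardinal.{u}} (hc : c.IsRegular) :
    Order.cof (Iio c.ord) = lift.{u + 1} c := by
  rw [cof_Iio, ← lift_cof, hc.cof_ord]

theorem HasOType.isCofinal_preimage_val {A : Set Ordinal.{u}} {θ : Ordinal.{u}}
    (hA : HasOType A θ) (hAθ : A ⊆ Iio θ) : IsCofinal ((↑) ⁻¹' A : Set (Iio θ)) := by
  obtain ⟨g⟩ := hA
  have hg : StrictMono (inclusion hAθ ∘ g) := fun _ _ h ↦ g.strictMono h
  exact (isCofinal_range_of_strictMono hg).mono (range_subset_iff.2 fun x ↦ (g x).2)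

theorem IsClosedSet.isClub_preimage_val {A : Set Ordinal.{u}} {θ : Ordinal.{u}}
    (hcl : IsClosedSet A) (hAθ : A ⊆ Iio θ) (hA : HasOType A θ) :
    IsClub ((↑) ⁻¹' A : Set (Iio θ)) := by
  have hcof := hA.isCofinal_preimage_val hAθ
  refine ⟨fun t htA ht _ x hx ↦ ?_, hcof⟩
  by_contra hxA
  have lt_of_mem : ∀ y ∈ t, (y : Ordinal) < x := fun y hy ↦
    (hx.1 hy).lt_of_ne fun h ↦ hxA (h ▸ htA hy)
  have hx_lt_sSup : (x : Ordinal) < sSup A := by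
    obtain ⟨y, hyA, hxy⟩ := hcof x
    have hxy : x < y := hxy.lt_of_ne fun h ↦ hxA (h ▸ hyA)
    exact lt_csSup_of_lt ⟨θ, fun _ hz ↦ (hAθ hz).le⟩ hyA hxy
  have hx_ne_zero : (x : Ordinal) ≠ 0 := by
    obtain ⟨z, hz⟩ := ht
    exact (pos_of_gt (lt_of_mem z hz)).ne'
  refine hxA (hcl x hx_lt_sSup hx_ne_zero (le_antisymm (csSup_le' fun _ hz ↦ hz.2.le) ?_))
  refine le_of_forall_lt fun c hc ↦ ?_
  obtain ⟨z, hz, hcz⟩ := (lt_isLUB_iff hx (b := ⟨c, hc.trans x.2⟩)).1 hc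
  exact lt_csSup_of_lt ⟨x, fun _ hw ↦ hw.2.le⟩ ⟨htA hz, lt_of_mem z hz⟩ hcz

theorem exists_lt_lt_forall_mem_of_isClosedSet {c : Cardinal.{u}} (hc : c.IsRegular) (hc₀ : ℵ₀ < c)
    {ι : Type v} (hι : lift.{u} #ι < lift.{v} c) {A : ι → Set Ordinal.{u}}
    (hcl : ∀ i, IsClosedSet (A i)) (hAc : ∀ i, A i ⊆ Iio c.ord) (hA : ∀ i, HasOType (A i) c.ord) :
    ∃ α γ β, α < γ ∧ γ < β ∧ β < c.ord ∧ ∀ i, α ∈ A i ∧ γ ∈ A i ∧ β ∈ A i := by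
  have : NoMaxOrder (Iio c.ord) :=
    (isSuccLimit_ord hc.aleph0_le).isSuccPrelimit.noMaxOrder_Iio
  have : Nonempty (Iio c.ord) := ⟨⟨0, hc.ord_pos⟩⟩
  have hclub : IsClub (⋂ i, ((↑) ⁻¹' A i : Set (Iio c.ord))) := by
    refine .iInter ?_ ?_ fun i ↦ (hcl i).isClub_preimage_val (hAc i) (hA i)
    · rw [cof_Iio_ord_of_isRegular hc]
      exact (aleph0_lt_lift.2 hc₀).ne'
    · rw [cof_Iio_ord_of_isRegular hc]
      simpa using lift_strictMono.{max u v, u + 1} hι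
  obtain ⟨α, hα, γ, hγ, β, hβ, hαγ, hγβ⟩ := exists_lt_lt_of_isCofinal hclub.isCofinal
  rw [mem_iInter] at hα hγ hβ
  exact ⟨α, γ, β, hαγ, hγβ, β.2, fun i ↦ ⟨hα i, hγ i, hβ i⟩⟩

theorem mul_self_add_lt_succ_mul_succ {α β : Ordinal.{u}} (h : α ≤ β) :
    β * β + α < Order.succ β * Order.succ β := by
  calc β * β + α < β * β + Order.succ β := by gcongr; exact Order.lt_succ_of_le h
    _ ≤ Order.succ β * β + Order.succ β := by gcongr; exact Order.le_succ β
    _ = Order.succ β * Order.succ β := (mul_succ _ _).symm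

theorem mul_self_add_inj {α β γ δ : Ordinal.{u}} (hα : α ≤ β) (hγ : γ ≤ δ) :
    β * β + α = δ * δ + γ ↔ β = δ ∧ α = γ := by
  have lt_of_lt {α β γ δ : Ordinal.{u}} (hα : α ≤ β) (hβδ : β < δ) :
      β * β + α < δ * δ + γ :=
    calc β * β + α < Order.succ β * Order.succ β := mul_self_add_lt_succ_mul_succ hα
      _ ≤ δ * δ := mul_le_mul' (Order.succ_le_of_lt hβδ) (Order.succ_le_of_lt hβδ)
      _ ≤ δ * δ + γ := le_self_add
  refine ⟨fun h ↦ ?_, fun ⟨hβ, hα⟩ ↦ by rw [hβ, hα]⟩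
  obtain hβδ | rfl | hδβ := lt_trichotomy β δ
  · exact absurd h (lt_of_lt hα hβδ).ne
  · exact ⟨rfl, add_left_cancel h⟩
  · exact absurd h (lt_of_lt hγ hδβ).ne'

/-- The regressive map which sends `b` to `min a b` and fixes every other point, so that for
`a < b` it identifies `a` with `b` and no other two points; for `b ≤ a` it is the identity. -/
def collapse {α : Type u} [LinearOrder α] (a b : α) : α → α :=
  Function.update id b (min a b)

theorem collapse_of_ne {α : Type u} [LinearOrder α] {a b x : α} (hx : x ≠ b) :
    collapse a b x = x :=
  Function.update_of_ne hx _ _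

theorem collapse_le {α : Type u} [LinearOrder α] (a b x : α) : collapse a b x ≤ x := by
  obtain rfl | hx := eq_or_ne x b
  · simp [collapse]
  · exact (collapse_of_ne hx).le

theorem collapse_left_eq_collapse_right {α : Type u} [LinearOrder α] {a b : α} (hab : a ≤ b) :
    collapse a b a = collapse a b b := by
  simp [collapse, Function.update_apply, hab]

/-- The coloring of pairs of ordinals `α < β` in which two different pairs share a color exactly
if they are `{a, β}` and `{b, β}` with `p β = (a, b)` and `a < b`. The summand `β * β` separates
the colors of different top points. -/
noncomputable def mergeColoring (p : Ordinal.{u} → Ordinal.{u} × Ordinal.{u})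
    (α β : Ordinal.{u}) : Ordinal.{u} :=
  β * β + collapse (p β).1 (p β).2 α

section MergeColoring

variable (p : Ordinal.{u} → Ordinal.{u} × Ordinal.{u}) {α β γ δ κ : Ordinal.{u}}

theorem mergeColoring_lt {c : Cardinal.{u}} (hc : ℵ₀ ≤ c) (hαβ : α ≤ β) (hβ : β < c.ord) :
    mergeColoring p α β < c.ord := by
  have hβ' : Order.succ β < c.ord := (isSuccLimit_ord hc).succ_lt hβ
  exact (mul_self_add_lt_succ_mul_succ ((collapse_le _ _ _).trans hαβ)).trans
    (isPrincipal_mul_ord hc hβ' hβ')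

theorem mergeColoring_eq_iff (hαβ : α ≤ β) (hγδ : γ ≤ δ) :
    mergeColoring p α β = mergeColoring p γ δ ↔
      β = δ ∧ collapse (p β).1 (p β).2 α = collapse (p δ).1 (p δ).2 γ :=
  mul_self_add_inj ((collapse_le _ _ _).trans hαβ) ((collapse_le _ _ _).trans hγδ)

theorem isNormalColoring_mergeColoring : IsNormalColoring (mergeColoring p) κ :=
  fun _ _ _ _ hαβ _ hγδ _ h ↦ ((mergeColoring_eq_iff p hαβ.le hγδ.le).1 h).1

theorem twoBounded_mergeColoring : TwoBounded (mergeColoring p) κ := by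
  intro ξ
  obtain hempty | ⟨⟨α, β⟩, hαβ, -, hα⟩ := eq_empty_or_nonempty
    {q : Ordinal × Ordinal | q.1 < q.2 ∧ q.2 < κ ∧ mergeColoring p q.1 q.2 = ξ}
  · simp only [hempty, encard_empty, zero_le]
  calc {q : Ordinal × Ordinal | q.1 < q.2 ∧ q.2 < κ ∧ mergeColoring p q.1 q.2 = ξ}.encard
    _ ≤ ({((p β).2, β), (collapse (p β).1 (p β).2 α, β)} : Set (Ordinal × Ordinal)).encard := by
        refine encard_le_encard ?_
        rintro ⟨γ, δ⟩ ⟨hγδ, -, hγ⟩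
        obtain ⟨rfl, hcollapse⟩ := (mergeColoring_eq_iff p hαβ.le hγδ.le).1 (hα.trans hγ.symm)
        refine or_iff_not_imp_left.2 fun hne ↦ Prod.ext ?_ rfl
        rw [collapse_of_ne fun h ↦ hne (Prod.ext h rfl)] at hcollapse
        exact hcollapse.symm
    _ ≤ 2 := by
        rw [← one_add_one_eq_two]
        exact (encard_insert_le _ _).trans_eq (by rw [encard_singleton])

variable {p}

theorem mergeColoring_eq_of_eq_prodMk (hp : p β = (α, γ)) (hαγ : α ≤ γ) :
    mergeColoring p α β = mergeColoring p γ β := by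
  simp only [mergeColoring, hp, collapse_left_eq_collapse_right hαγ]

end MergeColoring

/-- For every infinite cardinal `κ`, `κ⁺ ↛^poly (κ⁺-cl)²_{2-bdd}`: there is a normal
2-bounded coloring `f : [κ⁺]² → κ⁺` with no closed `f`-rainbow subset of order type `κ⁺`. -/
theorem stmt0 (κ : Cardinal) (hκ : ℵ₀ ≤ κ) :
    ∃ f : Ordinal → Ordinal → Ordinal,
      (∀ α β : Ordinal, α < β → β < (Order.succ κ).ord → f α β < (Order.succ κ).ord) ∧
      IsNormalColoring f (Order.succ κ).ord ∧
      TwoBounded f (Order.succ κ).ord ∧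
      ∀ A : Set Ordinal, A ⊆ Set.Iio (Order.succ κ).ord → IsClosedSet A →
        HasOType A (Order.succ κ).ord → ¬ IsRainbow f A := by
  induction κ using Cardinal.inductionOn with | _ ι
  have : Infinite ι := infinite_iff.2 hκ
  have hreg := isRegular_succ hκ
  obtain ⟨p, hp⟩ := exists_family_forall_lt_ord_succ_exists_eq_prodMk ι
  by_contra! no_coloring
  choose A hAκ hcl hA hrainbow using fun i ↦ no_coloring (mergeColoring (p i))
    (fun _ _ hαβ ↦ mergeColoring_lt _ hreg.aleph0_le hαβ.le)
    (isNormalColoring_mergeColoring _) (twoBounded_mergeColoring _)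
  obtain ⟨α, γ, β, hαγ, hγβ, hβ, hmem⟩ := exists_lt_lt_forall_mem_of_isClosedSet hreg
    (Order.lt_succ_of_le hκ) (lift_lt.2 (Order.lt_succ #ι)) hcl hAκ hA
  have hαβ := hαγ.trans hγβ
  obtain ⟨i, hi⟩ := hp β hβ α hαβ γ hγβ
  obtain ⟨hα, hγ, hβ⟩ := hmem i
  exact hαγ.ne (hrainbow i α hα β hβ γ hγ β hβ hαβ hγβ
    (mergeColoring_eq_of_eq_prodMk hi hαγ.le)).1
end

section
/- If ω₂ →^poly (ω₁-cl)²_{<ω-bdd} holds, then for every ordinal σ < ω₁, ω₂ →^poly ((ω₁+σ)-cl)²_{<ω-bdd} holds; that is, if every normal <ω-bounded coloring f:[ω₂]²→ω₂ admits a closed f-rainbow set of order type ω₁, then for every σ<ω₁ every such coloring admits a closed f-rainbow set of order type ω₁+σ. -/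
open Set Cardinal Ordinal

universe u

/-!
Fix a coloring of pairs below `μ`, where `μ = ω₂` and `κ = ω₁` in the application. Since `μ` is
additively principal, the arrow relation gives closed rainbow sets of type `κ` above every point
below `μ`, so their suprema form a set with at least `κ` elements. Choose `κ` of these suprema and
a closed rainbow set `B` of type `σ` above all of them. By boundedness fewer than `κ` points share
their color towards some `β ∈ B` with a point of `B`, so one of the suprema, `δ = sup A`, does not,
and `{δ} ∪ B` is still rainbow. For each `a ∈ A` fewer than `κ` points have the same color as `a`
towards some point of `{δ} ∪ B`, so a diagonal intersection yields a closed `C ⊆ A`, cofinal in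
`A`, no two points of which have the same color towards a point of `{δ} ∪ B`; discarding an initial
segment of `C` avoids the colors of `{δ} ∪ B` as well. By normality `C ∪ {δ} ∪ B` is rainbow. It is
closed because `sup C = δ`, and its order type is `κ + 1 + σ ≥ κ + σ`.
-/

universe v w

section DiagonalIntersection

variable {α : Type*} [LinearOrder α]

theorem isClub_setOf_forall_mem_lt {s : Set α} (hs : #s < Order.cof α) :
    IsClub {b | ∀ a ∈ s, a < b} where
  dirSupClosed := IsUpperSet.dirSupClosed fun _ _ hbc hb a ha ↦ (hb a ha).trans_le hbc
  isCofinal a := by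
    obtain ⟨b, hb⟩ := not_isCofinal_iff.1 fun h ↦ (Order.cof_le h).not_gt hs
    exact ⟨max a b, fun c hc ↦ (hb c hc).trans_le (le_max_right a b), le_max_left a b⟩

variable [WellFoundedLT α]

theorem exists_isLUB_range_nat (hα : ℵ₀ < Order.cof α) (x : ℕ → α) :
    ∃ b, IsLUB (range x) b := by
  have hx : #(range x) < Order.cof α :=
    ((countable_range x).le_aleph0).trans_lt hα
  have hbdd : BddAbove (range x) := .of_not_isCofinal fun h ↦ (Order.cof_le h).not_gt hx
  obtain ⟨b, hb, hmin⟩ := wellFounded_lt.has_min _ hbdd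
  exact ⟨b, hb, fun c hc ↦ not_lt.1 (hmin c hc)⟩

variable [IsRegularCardinalOrder α]

theorem exists_gt_forall_le_mem (hα : ℵ₀ < Order.cof α) {C : α → Set α}
    (hC : ∀ a, IsClub (C a)) (a : α) : ∃ b, a < b ∧ ∀ i ≤ a, b ∈ C i := by
  have : Nonempty α := ⟨a⟩
  have hIic : #(Iic a) < Order.cof α := by
    rw [Order.cof_eq_cardinalMk] at hα ⊢
    exact mk_Iic_lt a ord_cardinalMk hα.le
  have hClub : IsClub ({b | ∀ i ∈ Iic a, i < b} ∩ ⋂ i : Iic a, C i) :=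
    (isClub_setOf_forall_mem_lt hIic).inter hα.ne' (.iInter hα.ne' (by simpa using hIic) (hC ·))
  obtain ⟨b, hab, hb⟩ := hClub.nonempty
  exact ⟨b, hab a le_rfl, fun i hi ↦ mem_iInter.1 hb ⟨i, hi⟩⟩

theorem isClub_diagonal (hα : ℵ₀ < Order.cof α) {C : α → Set α} (hC : ∀ a, IsClub (C a)) :
    IsClub {b | ∀ a < b, b ∈ C a} where
  dirSupClosed := by
    refine dirSupClosed_iff_of_linearOrder.2 fun d hd _ b hb a hab ↦ ?_
    obtain ⟨c, hcd, hac⟩ := (lt_isLUB_iff hb).1 hab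
    exact (hC a).isLUB_mem (t := d ∩ Ici c) (fun x hx ↦ hd hx.1 a (hac.trans_le hx.2))
      ⟨c, hcd, le_rfl⟩ (hb.inter_Ici_of_mem hcd)
  isCofinal a₀ := by
    choose G hG hGC using exists_gt_forall_le_mem hα hC
    let x (n : ℕ) : α := G^[n] a₀
    have hx (n : ℕ) : x (n + 1) = G (x n) := Function.iterate_succ_apply' G n a₀
    have hmono : StrictMono x := strictMono_nat_of_lt_succ fun n ↦ hx n ▸ hG (x n)
    obtain ⟨b, hb⟩ := exists_isLUB_range_nat hα x
    refine ⟨b, fun a hab ↦ ?_, hb.1 ⟨0, rfl⟩⟩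
    obtain ⟨_, ⟨n, rfl⟩, han⟩ := (lt_isLUB_iff hb).1 hab
    refine (hC a).isLUB_mem (t := range x ∩ Ici (x (n + 1))) ?_ ⟨x (n + 1), ⟨_, rfl⟩, le_rfl⟩
      (hb.inter_Ici_of_mem ⟨n + 1, rfl⟩)
    rintro _ ⟨⟨m, rfl⟩, hm⟩
    obtain ⟨k, rfl⟩ := Nat.exists_eq_add_of_le' (hmono.le_iff_le.1 hm)
    rw [← add_assoc, hx]
    exact hGC _ a (han.le.trans (hmono.monotone (Nat.le_add_left n k)))

theorem exists_isClub_free (hα : ℵ₀ < Order.cof α) {R : α → Set α}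
    (hR : ∀ a, #(R a) < Order.cof α) :
    ∃ E, IsClub E ∧ ∀ a ∈ E, ∀ b ∈ E, a < b → b ∉ R a :=
  ⟨_, isClub_diagonal hα fun a ↦ isClub_setOf_forall_mem_lt (hR a), fun _ _ b hb hab hbR ↦
    (hb _ hab b hbR).false⟩

end DiagonalIntersection

section OrderType

theorem exists_strictMonoOn_image_eq {α β : Type*} [LinearOrder α] [LinearOrder β] [Nonempty β]
    {s : Set α} {t : Set β} (e : s ≃o t) : ∃ f : α → β, StrictMonoOn f s ∧ f '' s = t := by
  let f : α → β := Function.extend Subtype.val (Subtype.val ∘ e) fun _ ↦ Classical.arbitrary β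
  have hf (x : s) : f x = e x := Subtype.val_injective.extend_apply _ _ x
  refine ⟨f, fun x hx y hy hxy ↦ ?_, ?_⟩
  · rw [hf ⟨x, hx⟩, hf ⟨y, hy⟩]
    exact e.strictMono hxy
  · rw [image_eq_range]
    simp_rw [hf]
    exact (e.surjective.range_comp Subtype.val).trans Subtype.range_coe

theorem nonempty_Iio_orderIso_Iio {θ : Ordinal.{u}} {η : Ordinal.{v}}
    (h : Ordinal.lift.{v} θ = Ordinal.lift.{u} η) : Nonempty (Iio θ ≃o Iio η) := by
  have : Nonempty ((· < · : Iio θ → Iio θ → Prop) ≃r (· < · : Iio η → Iio η → Prop)) := by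
    rw [← Ordinal.lift_type_eq.{u + 1, v + 1, 0}]
    simpa using congrArg Ordinal.lift.{max (u + 1) (v + 1)} h
  exact this.map .ofRelIsoLT

theorem hasCardinalLT_iff_mk_lt_lift {X : Type max u v} {κ : Cardinal.{u}} :
    HasCardinalLT X κ ↔ #X < Cardinal.lift.{v} κ := by
  rw [← hasCardinalLT_iff_cardinal_mk_lt, hasCardinalLT_lift_iff]

variable {A B : Set Ordinal.{u}} {θ η μ : Ordinal.{u}} {κ : Cardinal.{u}}

theorem hasOType_iff : HasOType A θ ↔ typeLT A = Ordinal.lift.{u + 1} θ := by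
  rw [← type_lt_Iio, eq_comm, Ordinal.type_eq]
  exact ⟨fun ⟨e⟩ ↦ ⟨e.toRelIsoLT⟩, fun ⟨e⟩ ↦ ⟨.ofRelIsoLT e⟩⟩

theorem HasOType.cardinalMk (hA : HasOType A θ) : #A = Cardinal.lift.{u + 1} θ.card := by
  simpa using congrArg Ordinal.card (hasOType_iff.1 hA)

theorem HasOType.hasCardinalLT (hA : HasOType A θ) (hθ : θ < κ.ord) : HasCardinalLT A κ := by
  rw [hasCardinalLT_iff_mk_lt_lift.{u, u + 1}, hA.cardinalMk, Cardinal.lift_lt]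
  exact lt_ord.1 hθ

theorem HasOType.bddAbove (hA : HasOType A θ) : BddAbove A :=
  let ⟨e⟩ := hA
  have : Small.{u} A := small_map e.symm.toEquiv
  bddAbove_of_small

theorem HasOType.union (hA : HasOType A θ) (hB : HasOType B η) (hAB : ∀ a ∈ A, ∀ b ∈ B, a < b) :
    HasOType (A ∪ B) (θ + η) := by
  rw [hasOType_iff] at *
  rw [Ordinal.lift_add, ← hA, ← hB, ← type_sum_lex, eq_comm, Ordinal.type_eq]
  let g : A ⊕ₗ B → (A ∪ B : Set Ordinal.{u}) :=
    Sum.elim (inclusion subset_union_left) (inclusion subset_union_right) ∘ ofLex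
  have hg : StrictMono g := by
    rintro (a | a) (b | b) hab
    · exact Sum.Lex.inl_lt_inl_iff (α := A) (β := B).1 hab
    · exact hAB a a.2 b b.2
    · cases hab.not_ge (Sum.Lex.inl_le_inr b a)
    · exact Sum.Lex.inr_lt_inr_iff (α := A) (β := B).1 hab
  have hsurj : Function.Surjective g := by
    rintro ⟨x, hx | hx⟩
    exacts [⟨Sum.inlₗ ⟨x, hx⟩, rfl⟩, ⟨Sum.inrₗ ⟨x, hx⟩, rfl⟩]
  exact ⟨(hg.orderIsoOfSurjective g hsurj).toRelIsoLT⟩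

theorem hasOType_singleton (a : Ordinal.{u}) : HasOType {a} 1 :=
  hasOType_iff.2 (by simp)

theorem HasOType.image {A : Set Ordinal.{v}} {η : Ordinal.{v}} {e : Ordinal.{v} → Ordinal.{u}}
    (hA : HasOType A η) (he : StrictMonoOn e A)
    (hη : Ordinal.lift.{v} θ = Ordinal.lift.{u} η) : HasOType (e '' A) θ :=
  let ⟨i⟩ := nonempty_Iio_orderIso_Iio hη
  let ⟨j⟩ := hA
  ⟨(i.trans j).trans (he.orderIso e A)⟩

theorem HasOType.exists_inter_Iio (hA : HasOType A θ) (hη : η ≤ θ) :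
    ∃ b, HasOType (A ∩ Iio b) η := by
  obtain rfl | hη := hη.eq_or_lt
  · obtain ⟨b, hb⟩ := hA.bddAbove
    refine ⟨Order.succ b, ?_⟩
    rwa [inter_eq_left.2 fun x hx ↦ mem_Iio.2 (Order.lt_succ_iff.2 (hb hx))]
  · obtain ⟨e⟩ := hA
    obtain ⟨f, hf, rfl⟩ := exists_strictMonoOn_image_eq e
    have hIio : f '' Iio θ ∩ Iio (f η) = f '' Iio η := by
      ext x
      constructor
      · rintro ⟨⟨y, hy, rfl⟩, hyη⟩
        exact ⟨y, (hf.lt_iff_lt hy hη).1 hyη, rfl⟩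
      · rintro ⟨y, hy, rfl⟩
        exact ⟨⟨y, hy.trans hη, rfl⟩, hf (hy.trans hη) hη hy⟩
    exact ⟨f η, hIio ▸ HasOType.image ⟨.refl _⟩ (hf.mono (Iio_subset_Iio hη.le)) rfl⟩

theorem HasOType.cof_eq (hA : HasOType A κ.ord) (hκ : κ.IsRegular) :
    Order.cof A = Cardinal.lift.{u + 1} κ := by
  rw [← Ordinal.cof_type, hasOType_iff.1 hA, lift_ord, hκ.lift.cof_ord]

theorem HasOType.isRegularCardinalOrder (hA : HasOType A κ.ord)
    (hκ : κ.IsRegular) : IsRegularCardinalOrder A where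
  type_lt_le_ord_cof := by rw [hA.cof_eq hκ, hasOType_iff.1 hA, lift_ord]

theorem HasOType.lt_sSup (hA : HasOType A κ.ord) (hκ : κ.IsRegular) {a : Ordinal.{u}}
    (ha : a ∈ A) : a < sSup A := by
  have : Nonempty A := ⟨⟨a, ha⟩⟩
  have : NoTopOrder A := by
    rw [← Order.one_lt_cof_iff, hA.cof_eq hκ, one_lt_lift_iff]
    exact one_lt_aleph0.trans_le hκ.aleph0_le
  have := (noTopOrder_iff_noMaxOrder A).1 this
  obtain ⟨b, hab⟩ := exists_gt (⟨a, ha⟩ : A)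
  exact lt_of_lt_of_le hab (le_csSup hA.bddAbove b.2)

theorem sSup_lt_of_mk_le_lift (hκμ : κ < μ.cof) (hA : #A ≤ Cardinal.lift.{u + 1} κ)
    (hAμ : A ⊆ Iio μ) : sSup A < μ := by
  refine Ordinal.sSup_lt_of_lt_cof (hA.trans_lt ?_) hAμ
  rwa [← Ordinal.lift_cof, Cardinal.lift_lt]

end OrderType

section Closed

variable {A B : Set Ordinal.{u}}

theorem isClosedSet_iff (hA : BddAbove A) : IsClosedSet A ↔
    ∀ ⦃t⦄, t ⊆ A → t.Nonempty → ∀ ⦃α⦄, IsLUB t α → ∀ a ∈ A, α ≤ a → α ∈ A := by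
  constructor
  · intro h t htA ht α hα a ha hαa
    by_contra hαA
    have hlt : ∀ x ∈ t, x < α := fun x hx ↦ (hα.1 hx).lt_of_ne (hαA <| · ▸ htA hx)
    obtain ⟨x, hx⟩ := ht
    refine hαA (h α ?_ (ne_bot_of_gt (hlt x hx)) ?_)
    · exact (hαa.lt_of_ne (hαA <| · ▸ ha)).trans_le (le_csSup hA ha)
    · have : IsLUB (A ∩ Iio α) α :=
        ⟨fun y hy ↦ hy.2.le, fun b hb ↦ hα.2 fun y hy ↦ hb ⟨htA hy, hlt y hy⟩⟩
      exact this.csSup_eq ⟨x, htA hx, hlt x hx⟩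
  · intro h α hα hα₀ hsup
    have ht : (A ∩ Iio α).Nonempty := by
      by_contra hempty
      simp [not_nonempty_iff_eq_empty.1 hempty, hα₀.symm] at hsup
    have hlub : IsLUB (A ∩ Iio α) α := by
      simpa [hsup] using isLUB_csSup ht ⟨α, fun x hx ↦ hx.2.le⟩
    obtain ⟨a, ha, hαa⟩ := exists_lt_of_lt_csSup (ht.mono inter_subset_left) hα
    exact h inter_subset_left ht hlub a ha hαa.le

theorem IsClosedSet.inter_Iio (hA : IsClosedSet A) (hbdd : BddAbove A) (b : Ordinal.{u}) :
    IsClosedSet (A ∩ Iio b) := by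
  rw [isClosedSet_iff hbdd] at hA
  rw [isClosedSet_iff (hbdd.mono inter_subset_left)]
  exact fun t htA ht α hα a ha hαa ↦
    ⟨hA (fun x hx ↦ (htA hx).1) ht hα a ha.1 hαa, hαa.trans_lt ha.2⟩

theorem isClosedSet_singleton (a : Ordinal.{u}) : IsClosedSet {a} := by
  rw [isClosedSet_iff bddAbove_singleton]
  rintro t hta ht α hα - - -
  obtain rfl : t = {a} := ht.subset_singleton_iff.1 hta
  exact hα.unique isLUB_singleton

theorem IsClosedSet.union (hA : IsClosedSet A) (hB : IsClosedSet B) (hAbdd : BddAbove A)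
    (hBbdd : BddAbove B) (hAB : ∀ a ∈ A, ∀ b ∈ B, a < b) (hsup : sSup A ∈ A ∪ B) :
    IsClosedSet (A ∪ B) := by
  rw [isClosedSet_iff hAbdd] at hA
  rw [isClosedSet_iff hBbdd] at hB
  rw [isClosedSet_iff (hAbdd.union hBbdd)]
  intro t ht htne α hα x hx hαx
  by_cases htA : t ⊆ A
  · have hle : α ≤ sSup A := hα.2 fun y hy ↦ le_csSup hAbdd (htA hy)
    obtain rfl | hlt := hle.eq_or_lt
    · exact hsup
    · obtain ⟨a, ha, hαa⟩ := exists_lt_of_lt_csSup (htne.mono htA) hlt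
      exact .inl (hA htA htne hα a ha hαa.le)
  · obtain ⟨c, hct, hcA⟩ := not_subset.1 htA
    have hcB : c ∈ B := (ht hct).resolve_left hcA
    have mem_B {y} (hy : y ∈ A ∪ B) (hcy : c ≤ y) : y ∈ B :=
      hy.resolve_left fun hyA ↦ (hAB y hyA c hcB).not_ge hcy
    exact .inr <| hB (t := t ∩ Ici c) (fun y hy ↦ mem_B (ht hy.1) hy.2) ⟨c, hct, self_mem_Ici⟩
      (hα.inter_Ici_of_mem hct) x (mem_B hx ((hα.1 hct).trans hαx)) hαx

theorem IsClosedSet.image {A s : Set Ordinal.{v}} {e : Ordinal.{v} → Ordinal.{u}}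
    (hA : IsClosedSet A) (hbdd : BddAbove A) (hs : s.OrdConnected)
    (he : StrictMonoOn e s) (hes : (e '' s).OrdConnected) (hAs : A ⊆ s)
    (hbdd' : BddAbove (e '' A)) : IsClosedSet (e '' A) := by
  rw [isClosedSet_iff hbdd] at hA
  rw [isClosedSet_iff hbdd']
  rintro _ ht htne α hα _ ⟨a, ha, rfl⟩ hαa
  obtain ⟨t, htA, rfl⟩ := subset_image_iff.1 ht
  obtain ⟨x, hx⟩ := htne.of_image
  obtain ⟨β, hβ, rfl⟩ := hes.out ⟨x, hAs (htA hx), rfl⟩ ⟨a, hAs ha, rfl⟩ ⟨hα.1 ⟨x, hx, rfl⟩, hαa⟩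
  have hβlub : IsLUB t β := by
    refine ⟨fun y hy ↦ (he.le_iff_le (hAs (htA hy)) hβ).1 (hα.1 ⟨y, hy, rfl⟩), fun b hb ↦ ?_⟩
    by_contra! hbβ
    have hbs : b ∈ s := hs.out (hAs (htA hx)) hβ ⟨hb hx, hbβ.le⟩
    refine (he hbs hβ hbβ).not_ge (hα.2 ?_)
    exact forall_mem_image.2 fun y hy ↦ (he.le_iff_le (hAs (htA hy)) hbs).2 (hb hy)
  exact ⟨β, hA htA ⟨x, hx⟩ hβlub a ha ((he.le_iff_le hβ (hAs ha)).1 hαa), rfl⟩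

theorem IsClosedSet.image_val_of_isClub (hA : IsClosedSet A) (hbdd : BddAbove A) {E : Set A}
    (hE : IsClub E) : IsClosedSet (Subtype.val '' E) := by
  rw [isClosedSet_iff hbdd] at hA
  rw [isClosedSet_iff (hbdd.mono (Subtype.coe_image_subset A E))]
  rintro _ ht htne α hα _ ⟨a, -, rfl⟩ hαa
  obtain ⟨t, htE, rfl⟩ := subset_image_iff.1 ht
  have hαA : α ∈ A := hA (Subtype.coe_image_subset A t) htne hα a a.2 hαa
  have hlub : IsLUB t ⟨α, hαA⟩ := .of_image (f := Subtype.val) Iff.rfl hα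
  exact ⟨⟨α, hαA⟩, hE.isLUB_mem htE htne.of_image hlub, rfl⟩

end Closed

theorem HasOType.exists_isClosedSet_free {κ : Cardinal.{u}} {A Q : Set Ordinal.{u}}
    {R : Ordinal.{u} → Set Ordinal.{u}} (hκ : κ.IsRegular) (hκ₀ : ℵ₀ < κ)
    (hA : HasOType A κ.ord) (hAcl : IsClosedSet A) (hR : ∀ a ∈ A, HasCardinalLT (R a) κ)
    (hQ : HasCardinalLT Q κ) :
    ∃ C ⊆ A, IsClosedSet C ∧ HasOType C κ.ord ∧ sSup C = sSup A ∧ Disjoint C Q ∧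
      ∀ a ∈ C, ∀ b ∈ C, a < b → b ∉ R a := by
  have := hA.isRegularCardinalOrder hκ
  have hcof₀ : ℵ₀ < Order.cof A := by
    rw [hA.cof_eq hκ]
    exact aleph0_lt_lift.2 hκ₀
  have hpre {S : Set Ordinal.{u}} (hS : HasCardinalLT S κ) :
      #(Subtype.val ⁻¹' S : Set A) < Order.cof A := by
    rw [hA.cof_eq hκ, ← hasCardinalLT_iff_mk_lt_lift]
    exact hS.of_injective (fun x ↦ ⟨x.1.1, x.2⟩) fun x y hxy ↦ by
      simpa [Subtype.ext_iff] using hxy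
  obtain ⟨E, hE, hER⟩ := exists_isClub_free hcof₀ fun a : A ↦ hpre (hR a a.2)
  have hEQ := hE.inter hcof₀.ne' (isClub_setOf_forall_mem_lt (hpre hQ))
  set C : Set A := E ∩ {b | ∀ a ∈ Subtype.val ⁻¹' Q, a < b}
  have hCA : Subtype.val '' C ⊆ A := Subtype.coe_image_subset A C
  refine ⟨Subtype.val '' C, hCA, hAcl.image_val_of_isClub hA.bddAbove hEQ, ?_, ?_, ?_, ?_⟩
  · have hval : StrictMonoOn Subtype.val C := (Subtype.strictMono_coe _).strictMonoOn C
    exact hA.map fun e ↦ (e.trans (Order.enum C hEQ.isCofinal)).trans (hval.orderIso _ C)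
  · refine le_antisymm (csSup_le_csSup' hA.bddAbove hCA) (csSup_le' fun a ha ↦ ?_)
    obtain ⟨c, hc, hac⟩ := hEQ.isCofinal ⟨a, ha⟩
    exact le_csSup_of_le (hA.bddAbove.mono hCA) ⟨c, hc, rfl⟩ hac
  · rw [disjoint_left]
    rintro _ ⟨c, hc, rfl⟩ hcQ
    exact (hc.2 c hcQ).false
  · rintro _ ⟨a, ha, rfl⟩ _ ⟨b, hb, rfl⟩ hab
    exact hER a ha.1 b hb.1 hab

section Coloring

/-- The points `x` that share their color towards some point of `T` with `γ`: the union over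
`β ∈ T` of the color classes `{x < β | f x β = f γ β}`. -/
def colorClass (f : Ordinal.{u} → Ordinal.{u} → Ordinal.{v}) (T : Set Ordinal.{u})
    (γ : Ordinal.{u}) : Set Ordinal.{u} :=
  {x | ∃ β ∈ T, x < β ∧ γ < β ∧ f x β = f γ β}

/-- The colorings quantified over by the relation `μ →^poly (θ-cl)²_{<ν-bdd}`: normal and
`<ν`-bounded, with values below `c` on pairs below `μ`. -/
structure IsBoundedColoring (f : Ordinal.{u} → Ordinal.{u} → Ordinal.{v}) (μ : Ordinal.{u})
    (c : Ordinal.{v}) (ν : Cardinal.{w}) : Prop where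
  lt : ∀ α β, α < β → β < μ → f α β < c
  isNormalColoring : IsNormalColoring f μ
  hasCardinalLT_fiber : ∀ ξ,
    HasCardinalLT {p : Ordinal × Ordinal | p.1 < p.2 ∧ p.2 < μ ∧ f p.1 p.2 = ξ} ν

/-- `A` is a closed `f`-rainbow set of order type `θ`. -/
structure IsClosedRainbow (f : Ordinal.{u} → Ordinal.{u} → Ordinal.{v}) (θ : Ordinal.{u})
    (A : Set Ordinal.{u}) : Prop where
  isClosedSet : IsClosedSet A
  hasOType : HasOType A θ
  isRainbow : IsRainbow f A

/-- The relation `μ →^poly (θ-cl)²_{<ν-bdd}`. The bound `c` on the colors is kept separate from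
`μ`, since points and colors may live in different universes. -/
def PolyArrow (μ : Ordinal.{u}) (c : Ordinal.{v}) (θ : Ordinal.{u}) (ν : Cardinal.{w}) : Prop :=
  ∀ f : Ordinal.{u} → Ordinal.{u} → Ordinal.{v}, IsBoundedColoring f μ c ν →
    ∃ A ⊆ Iio μ, IsClosedRainbow f θ A

variable {f : Ordinal.{u} → Ordinal.{u} → Ordinal.{v}} {μ θ η : Ordinal.{u}} {c : Ordinal.{v}}
  {ν : Cardinal.{w}} {A X T : Set Ordinal.{u}}

theorem IsRainbow.mono (hA : IsRainbow f A) (hXA : X ⊆ A) : IsRainbow f X :=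
  fun α hα β hβ γ hγ δ hδ ↦ hA α (hXA hα) β (hXA hβ) γ (hXA hγ) δ (hXA hδ)

theorem isClosedRainbow_singleton (f : Ordinal.{u} → Ordinal.{u} → Ordinal.{v})
    (δ : Ordinal.{u}) : IsClosedRainbow f 1 {δ} where
  isClosedSet := isClosedSet_singleton δ
  hasOType := hasOType_singleton δ
  isRainbow := by
    rintro _ rfl _ rfl _ - _ - hlt
    exact hlt.false.elim

theorem IsClosedRainbow.exists_inter_Iio (hA : IsClosedRainbow f θ A) (hη : η ≤ θ) :
    ∃ b, IsClosedRainbow f η (A ∩ Iio b) := by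
  obtain ⟨b, hb⟩ := hA.hasOType.exists_inter_Iio hη
  exact ⟨b, hA.isClosedSet.inter_Iio hA.hasOType.bddAbove b, hb,
    IsRainbow.mono hA.isRainbow inter_subset_left⟩

theorem PolyArrow.mono (h : PolyArrow μ c θ ν) (hη : η ≤ θ) : PolyArrow μ c η ν := fun f hf ↦
  let ⟨_, hAμ, hA⟩ := h f hf
  let ⟨_, hb⟩ := hA.exists_inter_Iio hη
  ⟨_, inter_subset_left.trans hAμ, hb⟩

theorem IsRainbow.union (hf : IsNormalColoring f μ) (hXμ : X ⊆ Iio μ) (hTμ : T ⊆ Iio μ)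
    (hX : IsRainbow f X) (hT : IsRainbow f T) (hXT : ∀ x ∈ X, ∀ t ∈ T, x < t)
    (hXX : ∀ a ∈ X, ∀ b ∈ X, a < b → b ∉ colorClass f T a)
    (hTX : ∀ t ∈ T, Disjoint X (colorClass f T t)) : IsRainbow f (X ∪ T) := by
  have hμ {x} (hx : x ∈ X ∪ T) : x < μ := hx.elim (hXμ ·) (hTμ ·)
  have mem_X {x y} (hx : x ∈ X ∪ T) (hy : y ∈ X) (hxy : x < y) : x ∈ X :=
    hx.resolve_right fun h ↦ (hXT y hy x h).not_gt hxy
  intro α hα β hβ γ hγ δ hδ hαβ hγδ heq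
  obtain rfl := hf α β γ δ hαβ (hμ hβ) hγδ (hμ hδ) heq
  obtain hβX | hβT := hβ
  · exact hX α (mem_X hα hβX hαβ) β hβX γ (mem_X hγ hβX hγδ) β hβX hαβ hγδ heq
  refine ⟨?_, rfl⟩
  obtain hαX | hαT := hα <;> obtain hγX | hγT := hγ
  · by_contra hne
    obtain hlt | hlt := Ne.lt_or_gt hne
    · exact hXX α hαX γ hγX hlt ⟨β, hβT, hγδ, hαβ, heq.symm⟩
    · exact hXX γ hγX α hαX hlt ⟨β, hβT, hαβ, hγδ, heq⟩
  · exact (disjoint_left.1 (hTX γ hγT) hαX ⟨β, hβT, hαβ, hγδ, heq⟩).elim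
  · exact (disjoint_left.1 (hTX α hαT) hγX ⟨β, hβT, hγδ, hαβ, heq.symm⟩).elim
  · exact (hT α hαT β hβT γ hγT β hβT hαβ hγδ heq).1

theorem IsClosedRainbow.union (hf : IsNormalColoring f μ) (hXμ : X ⊆ Iio μ) (hTμ : T ⊆ Iio μ)
    (hX : IsClosedRainbow f θ X) (hT : IsClosedRainbow f η T) (hXT : ∀ x ∈ X, ∀ t ∈ T, x < t)
    (hsup : sSup X ∈ X ∪ T) (hXX : ∀ a ∈ X, ∀ b ∈ X, a < b → b ∉ colorClass f T a)
    (hTX : ∀ t ∈ T, Disjoint X (colorClass f T t)) : IsClosedRainbow f (θ + η) (X ∪ T) where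
  isClosedSet := hX.isClosedSet.union hT.isClosedSet hX.hasOType.bddAbove hT.hasOType.bddAbove
    hXT hsup
  hasOType := hX.hasOType.union hT.hasOType hXT
  isRainbow := hX.isRainbow.union hf hXμ hTμ hT.isRainbow hXT hXX hTX

theorem IsBoundedColoring.hasCardinalLT_colorClass {ν κ : Cardinal.{w}}
    (hf : IsBoundedColoring f μ c ν) (hν : ν ≤ κ) (hκ : κ.IsRegular) (hTμ : T ⊆ Iio μ)
    (hT : HasCardinalLT T κ) (γ : Ordinal.{u}) : HasCardinalLT (colorClass f T γ) κ := by
  have : Fact κ.IsRegular := ⟨hκ⟩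
  have hsub : colorClass f T γ ⊆ ⋃ β : T, {x | x < β ∧ f x β = f γ β} :=
    fun x ⟨β, hβ, hx, _, heq⟩ ↦ mem_iUnion.2 ⟨⟨β, hβ⟩, hx, heq⟩
  refine (hasCardinalLT_iUnion _ hT fun β ↦ ?_).of_injective _ (inclusion_injective hsub)
  refine ((hf.hasCardinalLT_fiber (f γ β)).of_le hν).of_injective
    (fun x ↦ ⟨(x.1, β.1), x.2.1, hTμ β.2, x.2.2⟩) fun x y hxy ↦ ?_
  simpa [Subtype.ext_iff] using hxy

theorem IsBoundedColoring.hasCardinalLT_iUnion_colorClass {ν κ : Cardinal.{w}}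
    (hf : IsBoundedColoring f μ c ν) (hν : ν ≤ κ) (hκ : κ.IsRegular) (hTμ : T ⊆ Iio μ)
    (hT : HasCardinalLT T κ) : HasCardinalLT (⋃ t : T, colorClass f T t) κ :=
  have : Fact κ.IsRegular := ⟨hκ⟩
  hasCardinalLT_iUnion _ hT fun t ↦ hf.hasCardinalLT_colorClass hν hκ hTμ hT t

end Coloring

section Transport

universe u' v'

variable {f : Ordinal.{u} → Ordinal.{u} → Ordinal.{v}} {μ θ ρ : Ordinal.{u}} {c : Ordinal.{v}}
  {μ' θ' : Ordinal.{u'}} {c' : Ordinal.{v'}} {ν : Cardinal.{w}} {e : Ordinal.{u'} → Ordinal.{u}}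
  {d : Ordinal.{v} → Ordinal.{v'}} {A : Set Ordinal.{u'}}

theorem IsBoundedColoring.comap (hf : IsBoundedColoring f μ c ν) (he : StrictMonoOn e (Iio μ'))
    (heμ : MapsTo e (Iio μ') (Iio μ)) (hd : InjOn d (Iio c)) (hdc : MapsTo d (Iio c) (Iio c')) :
    IsBoundedColoring (fun α β ↦ d (f (e α) (e β))) μ' c' ν := by
  have he_lt {α β} (hαβ : α < β) (hβ : β < μ') : e α < e β := he (hαβ.trans hβ) hβ hαβ
  have hc {α β} (hαβ : α < β) (hβ : β < μ') : f (e α) (e β) < c :=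
    hf.lt _ _ (he_lt hαβ hβ) (heμ hβ)
  refine ⟨fun α β hαβ hβ ↦ hdc (hc hαβ hβ), ?_, fun ξ ↦ ?_⟩
  · intro α β γ δ hαβ hβ hγδ hδ heq
    exact he.injOn hβ hδ <| hf.isNormalColoring _ _ _ _ (he_lt hαβ hβ) (heμ hβ) (he_lt hγδ hδ)
      (heμ hδ) (hd (hc hαβ hβ) (hc hγδ hδ) heq)
  · have hpre {α β} (hαβ : α < β) (hβ : β < μ') (hξ : d (f (e α) (e β)) = ξ) :
        f (e α) (e β) = Function.invFunOn d (Iio c) ξ := by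
      rw [← hξ, hd.leftInvOn_invFunOn (hc hαβ hβ)]
    refine (hf.hasCardinalLT_fiber (Function.invFunOn d (Iio c) ξ)).of_injective
      (fun p ↦ ⟨(e p.1.1, e p.1.2), he_lt p.2.1 p.2.2.1, heμ p.2.2.1,
        hpre p.2.1 p.2.2.1 p.2.2.2⟩) ?_
    rintro ⟨⟨α, β⟩, hαβ, hβ, _⟩ ⟨⟨γ, δ⟩, hγδ, hδ, _⟩ heq
    simp only [Subtype.mk.injEq, Prod.mk.injEq] at heq ⊢
    exact ⟨he.injOn (hαβ.trans hβ) (hγδ.trans hδ) heq.1, he.injOn hβ hδ heq.2⟩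

theorem IsRainbow.image (hA : IsRainbow (fun α β ↦ d (f (e α) (e β))) A)
    (he : StrictMonoOn e A) : IsRainbow f (e '' A) := by
  rintro _ ⟨α, hα, rfl⟩ _ ⟨β, hβ, rfl⟩ _ ⟨γ, hγ, rfl⟩ _ ⟨δ, hδ, rfl⟩ hαβ hγδ heq
  obtain ⟨rfl, rfl⟩ := hA α hα β hβ γ hγ δ hδ ((he.lt_iff_lt hα hβ).1 hαβ)
    ((he.lt_iff_lt hγ hδ).1 hγδ) (congrArg d heq)
  exact ⟨rfl, rfl⟩

theorem PolyArrow.exists_subset_of_image_eq (h : PolyArrow μ' c' θ' ν)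
    (hf : IsBoundedColoring f μ c ν) (he : StrictMonoOn e (Iio μ')) (heμ : e '' Iio μ' = Ico ρ μ)
    (hθ : Ordinal.lift.{u'} θ = Ordinal.lift.{u} θ') (hd : InjOn d (Iio c))
    (hdc : MapsTo d (Iio c) (Iio c')) : ∃ A ⊆ Ico ρ μ, IsClosedRainbow f θ A := by
  have hmaps : MapsTo e (Iio μ') (Ico ρ μ) := mapsTo_iff_image_subset.2 heμ.subset
  obtain ⟨A, hAμ, hA⟩ := h _ (hf.comap he (hmaps.mono_right Ico_subset_Iio_self) hd hdc)
  have hOType : HasOType (e '' A) θ := hA.hasOType.image (he.mono hAμ) hθ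
  exact ⟨e '' A, (image_mono hAμ).trans heμ.subset,
    hA.isClosedSet.image hA.hasOType.bddAbove ordConnected_Iio he (heμ ▸ ordConnected_Ico) hAμ
      hOType.bddAbove, hOType, hA.isRainbow.image (he.mono hAμ)⟩

theorem PolyArrow.congr (h : PolyArrow μ' c' θ' ν) (hμ : Ordinal.lift.{u'} μ = Ordinal.lift.{u} μ')
    (hc : Ordinal.lift.{v'} c = Ordinal.lift.{v} c')
    (hθ : Ordinal.lift.{u'} θ = Ordinal.lift.{u} θ') : PolyArrow μ c θ ν := by
  obtain ⟨i⟩ := nonempty_Iio_orderIso_Iio hμ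
  obtain ⟨j⟩ := nonempty_Iio_orderIso_Iio hc
  obtain ⟨e, he, heμ⟩ := exists_strictMonoOn_image_eq i.symm
  obtain ⟨d, hd, hdc⟩ := exists_strictMonoOn_image_eq j
  intro f hf
  obtain ⟨A, hA, hAf⟩ := h.exists_subset_of_image_eq hf he (ρ := 0)
    (heμ.trans Ico_bot.symm) hθ hd.injOn (mapsTo_iff_image_subset.2 hdc.subset)
  exact ⟨A, hA.trans Ico_subset_Iio_self, hAf⟩

theorem PolyArrow.exists_subset_Ico (h : PolyArrow μ c θ ν) (hμ : IsPrincipal (· + ·) μ)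
    (hf : IsBoundedColoring f μ c ν) (hρ : ρ < μ) : ∃ A ⊆ Ico ρ μ, IsClosedRainbow f θ A := by
  have hIco : (ρ + ·) '' Iio μ = Ico ρ μ := by
    ext x
    constructor
    · rintro ⟨y, hy, rfl⟩
      exact ⟨le_self_add, hμ hρ hy⟩
    · rintro ⟨hρx, hx⟩
      exact ⟨x - ρ, (Ordinal.sub_le_self x ρ).trans_lt hx, Ordinal.add_sub_cancel_of_le hρx⟩
  exact h.exists_subset_of_image_eq hf (fun _ _ _ _ hlt ↦ add_lt_add_right hlt ρ) hIco rfl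
    (injOn_id _) (mapsTo_id _)

end Transport

section Extension

variable {f : Ordinal.{u} → Ordinal.{u} → Ordinal.{v}} {μ σ δ : Ordinal.{u}} {c : Ordinal.{v}}
  {κ ν : Cardinal.{u}} {A B : Set Ordinal.{u}}

theorem PolyArrow.le_mk_setOf_sSup (h : PolyArrow μ c κ.ord ν) (hf : IsBoundedColoring f μ c ν)
    (hκ : κ.IsRegular) (hμ : IsPrincipal (· + ·) μ) (hκμ : κ < μ.cof) :
    Cardinal.lift.{u + 1} κ ≤
      #{δ | δ < μ ∧ ∃ A, IsClosedRainbow f κ.ord A ∧ sSup A = δ} := by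
  set D := {δ | δ < μ ∧ ∃ A, IsClosedRainbow f κ.ord A ∧ sSup A = δ}
  by_contra! hD
  have hlim : Order.IsSuccLimit μ :=
    Ordinal.one_lt_cof_iff.1 ((one_lt_aleph0.trans_le hκ.aleph0_le).trans hκμ)
  have hDμ : D ⊆ Iio μ := fun δ hδ ↦ hδ.1
  obtain ⟨A, hAμ, hA⟩ := h.exists_subset_Ico hμ hf
    (hlim.succ_lt (sSup_lt_of_mk_le_lift hκμ hD.le hDμ))
  have hAcard : #A = Cardinal.lift.{u + 1} κ := by rw [hA.hasOType.cardinalMk, card_ord]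
  have hAD : sSup A ∈ D := ⟨sSup_lt_of_mk_le_lift hκμ hAcard.le (hAμ.trans Ico_subset_Iio_self),
    A, hA, rfl⟩
  obtain ⟨a, ha⟩ : A.Nonempty := by
    rw [← mk_set_ne_zero_iff, hAcard, Ne, Cardinal.lift_eq_zero]
    exact hκ.ne_zero
  have hle : sSup A ≤ sSup D := le_csSup ⟨μ, fun x hx ↦ (hDμ hx).le⟩ hAD
  exact (((hA.hasOType.lt_sSup hκ ha).trans_le hle).trans_le
    ((Order.le_succ _).trans (hAμ ha).1)).false

theorem IsClosedRainbow.exists_extension (hf : IsBoundedColoring f μ c ν) (hν : ν ≤ κ)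
    (hκ : κ.IsRegular) (hκ₀ : ℵ₀ < κ) (hA : IsClosedRainbow f κ.ord A)
    (hB : IsClosedRainbow f σ B) (hσ : σ < κ.ord) (hδ : sSup A = δ) (hδμ : δ < μ)
    (hBμ : B ⊆ Ioo δ μ) (hδB : δ ∉ ⋃ t : B, colorClass f B t) :
    ∃ C ⊆ Iio μ, IsClosedRainbow f (κ.ord + (1 + σ)) C := by
  have hBμ' : B ⊆ Iio μ := hBμ.trans Ioo_subset_Iio_self
  have hT : IsClosedRainbow f (1 + σ) ({δ} ∪ B) :=
    (isClosedRainbow_singleton f δ).union hf.isNormalColoring (singleton_subset_iff.2 hδμ) hBμ' hB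
      (by simpa using fun t ht ↦ (hBμ ht).1) (by simp) (by simp)
      fun t ht ↦ disjoint_singleton_left.2 fun h ↦ hδB (mem_iUnion.2 ⟨⟨t, ht⟩, h⟩)
  have hTμ : {δ} ∪ B ⊆ Iio μ := union_subset (singleton_subset_iff.2 hδμ) hBμ'
  have hTκ : HasCardinalLT ({δ} ∪ B : Set Ordinal.{u}) κ :=
    hT.hasOType.hasCardinalLT
      (isPrincipal_add_ord hκ.aleph0_le
        (one_lt_omega0.trans_le (omega0_le_ord.2 hκ.aleph0_le)) hσ)
  obtain ⟨C, hCA, hCcl, hC, hCsup, hCQ, hCR⟩ := hA.hasOType.exists_isClosedSet_free hκ hκ₀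
    hA.isClosedSet (fun a _ ↦ hf.hasCardinalLT_colorClass hν hκ hTμ hTκ a)
    (hf.hasCardinalLT_iUnion_colorClass hν hκ hTμ hTκ)
  have hCδ {a} (ha : a ∈ C) : a < δ := hδ ▸ hA.hasOType.lt_sSup hκ (hCA ha)
  have hCμ : C ⊆ Iio μ := fun a ha ↦ (hCδ ha).trans hδμ
  have hCT : ∀ a ∈ C, ∀ t ∈ {δ} ∪ B, a < t := by
    rintro a ha t (rfl | ht)
    exacts [hCδ ha, (hCδ ha).trans (hBμ ht).1]
  have hCrainbow : IsClosedRainbow f κ.ord C := ⟨hCcl, hC, IsRainbow.mono hA.isRainbow hCA⟩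
  exact ⟨C ∪ ({δ} ∪ B), union_subset hCμ hTμ, hCrainbow.union hf.isNormalColoring hCμ hTμ hT hCT
    (by simp [hCsup, hδ]) hCR fun t ht ↦
      hCQ.mono_right (subset_iUnion_of_subset ⟨t, ht⟩ subset_rfl)⟩

theorem stmt4_general (hκ : κ.IsRegular) (hκ₀ : ℵ₀ < κ) (hμ : IsPrincipal (· + ·) μ)
    (hκμ : κ < μ.cof) (hν : ν ≤ κ) (h : PolyArrow μ c κ.ord ν) (hσ : σ < κ.ord) :
    PolyArrow μ c (κ.ord + σ) ν := by
  intro f hf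
  obtain ⟨D, hD, hDcard⟩ := le_mk_iff_exists_subset.1 (h.le_mk_setOf_sSup hf hκ hμ hκμ)
  have hDμ : D ⊆ Iio μ := fun δ hδ ↦ (hD hδ).1
  have hlim : Order.IsSuccLimit μ :=
    Ordinal.one_lt_cof_iff.1 ((one_lt_aleph0.trans_le hκ.aleph0_le).trans hκμ)
  obtain ⟨B, hBμ, hB⟩ := (h.mono hσ.le).exists_subset_Ico hμ hf
    (hlim.succ_lt (sSup_lt_of_mk_le_lift hκμ hDcard.le hDμ))
  have hQ := hf.hasCardinalLT_iUnion_colorClass hν hκ (hBμ.trans Ico_subset_Iio_self)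
    (hB.hasOType.hasCardinalLT hσ)
  obtain ⟨δ, hδD, hδB⟩ : ∃ δ ∈ D, δ ∉ ⋃ t : B, colorClass f B t := by
    refine not_subset.1 fun hDQ ↦ ?_
    have hlt := hQ.of_injective _ (inclusion_injective hDQ)
    rw [hasCardinalLT_iff_mk_lt_lift.{u, u + 1}, hDcard] at hlt
    exact hlt.false
  obtain ⟨hδμ, A, hA, hAδ⟩ := hD hδD
  have hδ : δ ≤ sSup D := le_csSup ⟨μ, fun x hx ↦ (hDμ hx).le⟩ hδD
  have hBδ : B ⊆ Ioo δ μ := fun b hb ↦ ⟨hδ.trans_lt (Order.succ_le_iff.1 (hBμ hb).1), (hBμ hb).2⟩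
  obtain ⟨C, hCμ, hC⟩ := hA.exists_extension hf hν hκ hκ₀ hB hσ hAδ hδμ hBδ hδB
  obtain ⟨b, hb⟩ := hC.exists_inter_Iio (add_le_add_right le_add_self κ.ord)
  exact ⟨C ∩ Iio b, inter_subset_left.trans hCμ, hb⟩

end Extension

theorem polyArrow_aleph0_iff {μ θ : Ordinal.{u}} {c : Ordinal.{v}} :
    PolyArrow μ c θ (ℵ₀ : Cardinal.{w}) ↔ ∀ f : Ordinal.{u} → Ordinal.{u} → Ordinal.{v},
      (∀ α β : Ordinal, α < β → β < μ → f α β < c) → IsNormalColoring f μ → FinBounded f μ →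
        ∃ A : Set Ordinal, A ⊆ Iio μ ∧ IsClosedSet A ∧ HasOType A θ ∧ IsRainbow f A := by
  have hfin {s : Set (Ordinal.{u} × Ordinal.{u})} :
      HasCardinalLT s (ℵ₀ : Cardinal.{w}) ↔ s.Finite := hasCardinalLT_aleph0_iff s
  refine forall_congr' fun f ↦ ⟨fun h hlt hf hfib ↦ ?_, fun h hf ↦ ?_⟩
  · obtain ⟨A, hAμ, hA⟩ := h ⟨hlt, hf, fun ξ ↦ hfin.2 (hfib ξ)⟩
    exact ⟨A, hAμ, hA.isClosedSet, hA.hasOType, hA.isRainbow⟩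
  · obtain ⟨A, hAμ, hA, hAθ, hAf⟩ :=
      h hf.lt hf.isNormalColoring fun ξ ↦ hfin.1 (hf.hasCardinalLT_fiber ξ)
    exact ⟨A, hAμ, hA, hAθ, hAf⟩

/-- If `ω₂ →^poly (ω₁-cl)²_{<ω-bdd}`, then for every `σ < ω₁`,
`ω₂ →^poly ((ω₁+σ)-cl)²_{<ω-bdd}`. -/
theorem stmt4
    (h : ∀ f : Ordinal → Ordinal → Ordinal,
      (∀ α β : Ordinal, α < β → β < (Cardinal.aleph 2).ord → f α β < (Cardinal.aleph 2).ord) →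
      IsNormalColoring f (Cardinal.aleph 2).ord → FinBounded f (Cardinal.aleph 2).ord →
      ∃ A : Set Ordinal, A ⊆ Set.Iio (Cardinal.aleph 2).ord ∧ IsClosedSet A ∧
        HasOType A (Cardinal.aleph 1).ord ∧ IsRainbow f A) :
    ∀ σ : Ordinal, σ < (Cardinal.aleph 1).ord →
      ∀ f : Ordinal → Ordinal → Ordinal,
      (∀ α β : Ordinal, α < β → β < (Cardinal.aleph 2).ord → f α β < (Cardinal.aleph 2).ord) →
      IsNormalColoring f (Cardinal.aleph 2).ord → FinBounded f (Cardinal.aleph 2).ord →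
      ∃ A : Set Ordinal, A ⊆ Set.Iio (Cardinal.aleph 2).ord ∧ IsClosedSet A ∧
        HasOType A ((Cardinal.aleph 1).ord + σ) ∧ IsRainbow f A := by
  have hcof : Cardinal.aleph 1 < (Cardinal.aleph 2).ord.cof := by
    rw [← one_add_one_eq_two, (isRegular_aleph_add_one 1).cof_ord]
    exact aleph_lt_aleph.2 (Order.lt_add_one_iff.2 le_rfl)
  intro σ hσ
  refine polyArrow_aleph0_iff.1 (stmt4_general isRegular_aleph_one aleph0_lt_aleph_one
    (isPrincipal_add_ord (aleph0_le_aleph 2)) hcof (aleph0_le_aleph 1) ?_ hσ)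
  exact (polyArrow_aleph0_iff.2 h).congr (by simp) (by simp) (by simp)
end

section
/- Let κ, λ, μ be cardinals of uncountable cofinality and let ρ be a cardinal. Suppose (b) κ → (μ-st)²_{λ,<ρ}, i.e., for every f:[κ]²→λ there exists A⊆κ of order type μ, stationary in sup A, with |f''[A]²| < ρ, and (d) μ →^poly (par(<cf(μ)))²_{<ρ-t-bdd}. Then κ →^poly (μ-st)²_{<λ⁺-t-bdd}: every normal <λ⁺-type bounded coloring f:[κ]²→κ admits an f-rainbow set of order type μ that is stationary in its supremum. -/
open Set Cardinal Ordinal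

universe u

/-!
Color a pair `ξ < β` by the position of `ξ` in its color class `t_{ξβ}`. As the classes have type
less than `λ⁺`, this takes at most `λ` values, so the partition relation for `κ` yields a stationary
set `A` of type `μ` realizing fewer than `ρ` positions. Hence the color classes of `f` on `A` have
type at most some `b < ρ`, and the relation for `μ` splits `A`, as well as any other well-order of
type `μ`, into fewer than `cf μ` rainbow pieces.

If `μ` is regular, a stationary piece of `A` already has type `μ`. If `μ` is singular, a stationary
piece may be too small, and it is joined with a large rainbow set as follows. Let `S` be the trace
of `A` on a club of size `cf μ`. A free set argument gives a set `Y` of size `μ` which is rainbow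
and does not interact with `S`. The elements of `Y` can only violate injectivity by making
`f t y = f t' y` with `t, t' ∈ S`; the relation for `μ`, applied to the concatenation of `μ` copies
of `S` indexed by `Y`, provides a stationary part of `S` and a large part of `Y` for which this does
not happen.
-/

theorem exists_lt_and_lt_mk_setOf_le {T : Type u} {μ τ : Cardinal.{u}} (hμ : μ.ord.cof ≤ τ)
    (hτ : ℵ₀ ≤ τ) (hT : #T = Order.succ τ) (f : T → Cardinal.{u}) (hf : ∀ t, f t < μ) :
    ∃ m < μ, τ < #{t | f t ≤ m} := by
  obtain ⟨C, hC, hCμ⟩ := Order.exists_cof_eq μ.ord.ToType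
  rw [cof_toType] at hCμ
  have bound (t : T) : ∃ c : C, (f t).ord ≤ ToType.toOrd c.1 := by
    obtain ⟨c, hc, hle⟩ := hC (ToType.mk ⟨(f t).ord, ord_lt_ord.2 (hf t)⟩)
    exact ⟨⟨c, hc⟩, by simpa using! ToType.mk.symm.monotone hle⟩
  choose g hg using bound
  have hreg := isRegular_succ hτ
  obtain ⟨c, hc⟩ := infinite_pigeonhole g (hT ▸ hreg.aleph0_le)
    (by rw [hT, hreg.cof_ord, Order.lt_succ_iff]; exact hCμ.le.trans hμ)
  refine ⟨(ToType.toOrd c.1 : Ordinal).card, lt_ord.1 (ToType.toOrd c.1).2, ?_⟩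
  rw [← Order.succ_le_iff, ← hT, ← hc]
  refine mk_le_mk_of_subset fun t ht => ord_le.1 ((hg t).trans_eq ?_)
  rw [show g t = c from ht]

section FreeSet

variable {M : Type u} [LinearOrder M] [WellFoundedLT M]

theorem exists_balanced_coloring {T : Type u} (N : M → Set M) (hN : ∀ x, #(N x) < #T) :
    ∃ c : M → T, ∀ x, c x ∉ c '' (Iio x ∩ N x) ∧
      ∀ σ ∉ c '' (Iio x ∩ N x), #(Iio x ∩ c ⁻¹' {c x} : Set M) ≤ #(Iio x ∩ c ⁻¹' {σ} : Set M) := by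
  have step (x : M) (c : ∀ y, y < x → T) : ∃ t, (∀ y (hy : y < x), y ∈ N x → c y hy ≠ t) ∧
      ∀ σ, (∀ y (hy : y < x), y ∈ N x → c y hy ≠ σ) →
        #{y | ∃ hy : y < x, c y hy = t} ≤ #{y | ∃ hy : y < x, c y hy = σ} := by
    have allowed : {t | ∀ y (hy : y < x), y ∈ N x → c y hy ≠ t}.Nonempty := by
      by_contra! h
      have used (t : T) : ∃ y : N x, ∃ hy : y.1 < x, c y hy = t := by
        obtain ⟨y, hyN, hyx, hyt⟩ := by simpa using Set.eq_empty_iff_forall_notMem.1 h t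
        exact ⟨⟨y, hyN⟩, hyx, hyt⟩
      choose y hy hyt using used
      refine (hN x).not_ge (mk_le_of_injective (f := y) fun s t hst => ?_)
      rw [← hyt s, ← hyt t]
      congr 1
      exact congrArg Subtype.val hst
    obtain ⟨t, ht, hmin⟩ := exists_minimalFor_of_wellFoundedLT _
      (fun t => #{y | ∃ hy : y < x, c y hy = t}) allowed
    exact ⟨t, ht, fun σ hσ => (le_total _ _).elim id (hmin hσ)⟩
  choose G hG hGmin using step
  let c : M → T := (wellFounded_lt (α := M)).fix G
  have hc (x : M) : c x = G x fun y _ => c y := WellFounded.fix_eq _ _ _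
  refine ⟨c, fun x => ⟨?_, fun σ hσ => ?_⟩⟩
  · rintro ⟨y, ⟨hyx, hyN⟩, hy⟩
    exact hG x (fun y _ => c y) y hyx hyN (hy.trans (hc x))
  · have := hGmin x (fun y _ => c y) σ fun y hyx hyN hy => hσ ⟨y, ⟨hyx, hyN⟩, hy⟩
    rw [← hc x] at this
    simpa only [exists_prop] using! this

theorem mk_le_succ_of_forall_mk_inter_Iio_le {s : Set M} {m : Cardinal.{u}}
    (h : ∀ x ∈ s, #(Iio x ∩ s : Set M) ≤ m) : #s ≤ Order.succ m := by
  suffices typeLT s ≤ (Order.succ m).ord by simpa using card_le_card this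
  refine le_of_forall_lt fun a ha => ?_
  obtain ⟨x, rfl⟩ := typein_surj (· < ·) ha
  rw [lt_ord, Order.lt_succ_iff, card_typein]
  exact (mk_le_of_injective (f := fun y : {y // y < x} => ⟨y.1.1, y.2, y.1.2⟩)
    fun y z hyz => by simpa [Subtype.ext_iff] using hyz).trans (h x x.2)

-- Color each point, by recursion, with the color used least often so far among those not used on
-- its neighbors. Color classes are free, and they cannot all be small: at each step some color with
-- at most `m < #M` points is admissible, so then every class would have at most `m⁺` points.
theorem exists_free_set (hM : (#M).IsSingular) {τ : Cardinal.{u}} (hτ : τ < #M) (N : M → Set M)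
    (hN : ∀ x, #(N x) ≤ τ) :
    ∃ Y : Set M, #Y = #M ∧ ∀ x ∈ Y, ∀ y ∈ Y, y < x → y ∉ N x := by
  wlog hle : max (#M).ord.cof ℵ₀ ≤ τ generalizing τ
  · have aleph0_lt : ℵ₀ < #M := hM.aleph0_le.lt_of_ne fun h => not_isSingular_aleph0 (h ▸ hM)
    exact this (max_lt hτ (max_lt hM.cof_ord_lt aleph0_lt))
      (fun x => (hN x).trans (le_max_left _ _)) (le_max_right _ _)
  obtain ⟨hcof, hτ0⟩ := max_le_iff.1 hle
  have hsucc {m : Cardinal.{u}} (hm : m < #M) : Order.succ m < #M := hM.isSuccLimit.succ_lt hm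
  obtain ⟨T, hT⟩ : ∃ T : Type u, #T = Order.succ τ := ⟨_, mk_ord_toType _⟩
  obtain ⟨c, hc⟩ := exists_balanced_coloring (T := T) N
    fun x => hT ▸ Order.lt_succ_of_le (hN x)
  by_contra! hfree
  have fiber_lt (σ : T) : #(c ⁻¹' {σ}) < #M := by
    refine (mk_set_le _).lt_of_ne fun h => ?_
    obtain ⟨x, rfl, y, hy, hyx, hyN⟩ := hfree _ h
    exact (hc x).1 ⟨y, ⟨hyx, hyN⟩, hy⟩
  obtain ⟨m, hm, hτm⟩ := exists_lt_and_lt_mk_setOf_le hcof hτ0 hT _ fiber_lt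
  have fiber_le (σ : T) : #(c ⁻¹' {σ}) ≤ Order.succ m := by
    refine mk_le_succ_of_forall_mk_inter_Iio_le fun x hx => ?_
    obtain ⟨σ', hσ', hσ'N⟩ : ∃ σ', #(c ⁻¹' {σ'}) ≤ m ∧ σ' ∉ c '' (Iio x ∩ N x) := by
      by_contra! h
      exact hτm.not_ge ((mk_le_mk_of_subset h).trans (mk_image_le.trans
        ((mk_le_mk_of_subset inter_subset_right).trans (hN x))))
    rw [← show c x = σ from hx]
    exact ((hc x).2 σ' hσ'N).trans ((mk_le_mk_of_subset inter_subset_right).trans hσ')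
  refine (mul_lt_of_lt hM.aleph0_le (hsucc hτ) (hsucc hm)).not_ge ?_
  calc #M = #(⋃ σ, c ⁻¹' {σ}) := by
        rw [← preimage_iUnion, iUnion_of_singleton, preimage_univ, mk_univ]
    _ ≤ #T * ⨆ σ, #(c ⁻¹' {σ}) := mk_iUnion_le _
    _ ≤ Order.succ τ * Order.succ m := mul_le_mul' hT.le (ciSup_le' fiber_le)

end FreeSet

section OrderType

variable {α β : Type u} [LinearOrder α] [WellFoundedLT α] [LinearOrder β] [WellFoundedLT β]

theorem typeLT_le_of_strictMono {f : α → β} (hf : StrictMono f) : typeLT α ≤ typeLT β :=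
  (OrderEmbedding.ofStrictMono f hf).ltEmbedding.ordinal_type_le

theorem typeLT_le_iff {b : Ordinal.{u}} : typeLT α ≤ b ↔ Nonempty (α ↪o Iio b) := by
  conv_lhs => rw [← type_toType b, type_le_iff']
  exact ⟨fun ⟨e⟩ => ⟨(OrderEmbedding.ofStrictMono e fun _ _ => e.map_rel_iff.2).trans
    ToType.mk.symm.toOrderEmbedding⟩, fun ⟨e⟩ =>
    ⟨OrderEmbedding.ltEmbedding (e.trans ToType.mk.toOrderEmbedding)⟩⟩

theorem nonempty_orderIso_Iio_of_typeLT_eq {o : Ordinal.{u}} (hα : typeLT α = o) :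
    Nonempty (α ≃o Iio o) := by
  rw [← type_toType o, type_eq] at hα
  exact hα.map fun e => (OrderIso.ofRelIsoLT e).trans ToType.mk.symm

theorem typeLT_eq_ord {μ : Cardinal.{u}} (hα : #α = μ) (h : ∀ x : α, #(Iio x) < μ) :
    typeLT α = μ.ord := by
  refine le_antisymm (le_of_forall_lt fun a ha => ?_) (ord_le.2 (by rw [card_type, hα]))
  obtain ⟨x, rfl⟩ := typein_surj (· < ·) ha
  exact lt_ord.2 ((card_typein x).trans_lt (h x))

theorem mk_eq_of_typeLT_eq_ord {μ : Cardinal.{u}} (hα : typeLT α = μ.ord) : #α = μ := by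
  rw [← card_type (α := α) (· < ·), hα, card_ord]

theorem mk_Iio_lt_of_typeLT_eq_ord {μ : Cardinal.{u}} (hα : typeLT α = μ.ord) (x : α) :
    #(Iio x) < μ := by
  have hmk := mk_eq_of_typeLT_eq_ord hα
  exact (mk_Iio_lt x (by rw [hmk, hα])).trans_eq hmk

theorem mk_Iic_lt_of_typeLT_eq_ord {μ : Cardinal.{u}} (hμ : ℵ₀ ≤ μ) (hα : typeLT α = μ.ord)
    (x : α) : #(Iic x) < μ := by
  rw [← Iio_insert]
  exact mk_insert_le.trans_lt
    (add_lt_of_lt hμ (mk_Iio_lt_of_typeLT_eq_ord hα x) (one_lt_aleph0.trans_le hμ))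

theorem mk_le_card_of_typeLT_le {b : Ordinal.{u}} (h : typeLT α ≤ b) : #α ≤ b.card := by
  simpa using card_le_card h

theorem typeLT_prodLex_eq_ord {μ : Cardinal.{u}} (hμ : ℵ₀ ≤ μ) (hα : typeLT α = μ.ord)
    [Nonempty β] (hβ : #β < μ) : typeLT (α ×ₗ β) = μ.ord := by
  refine (type_prod_lex (α := β) (β := α) (· < ·) (· < ·)).trans ?_
  rw [hα]
  refine isPrincipal_mul_iff_mul_left_eq.1 (isPrincipal_mul_ord hμ) _ ?_ ?_
  · exact pos_iff_ne_zero.2 (type_ne_zero_of_nonempty _)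
  · rwa [lt_ord, card_type]

theorem exists_coe_apply_eq {L : Type*} [LE L] {o ξ : Ordinal.{u}} (φ : L ≃o Iio o) (hξ : ξ < o) :
    ∃ x, (φ x : Ordinal) = ξ :=
  ⟨φ.symm ⟨ξ, hξ⟩, congrArg Subtype.val (φ.apply_symm_apply _)⟩

end OrderType

theorem mul_self_add_lt_mul_self {a b r : Ordinal.{u}} (hr : r < a) (hab : a < b) :
    a * a + r < b * b :=
  calc a * a + r < a * a + a := by gcongr
    _ = a * Order.succ a := (mul_succ a a).symm
    _ ≤ b * b := mul_le_mul' hab.le (Order.succ_le_of_lt hab)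

section SquareColoring

variable {L : Type u} {C : Type*} [LinearOrder L]

/-- A coloring `F` is injective on the pairs of `X` with a common top point. For normal colorings
this is the same as `X` being rainbow. -/
def IsEndRainbow (F : L → L → C) (X : Set L) : Prop :=
  ∀ ⦃x⦄, x ∈ X → ∀ ⦃y⦄, y ∈ X → ∀ ⦃z⦄, z ∈ X → x < y → y < z → F x z ≠ F y z

theorem IsEndRainbow.mono {F : L → L → C} {X Y : Set L} (hY : IsEndRainbow F Y) (hXY : X ⊆ Y) :
    IsEndRainbow F X :=
  fun _ hx _ hy _ hz => hY (hXY hx) (hXY hy) (hXY hz)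

/-- The least point lying below `y` in the same color class as `x`: a canonical name, inside `L`,
for the color `F x y`. -/
noncomputable def leastInClass [WellFoundedLT L] (F : L → L → C) (x y : L) : L :=
  wellFounded_lt.min {x' | F x' y = F x y} ⟨x, rfl⟩

variable [WellFoundedLT L] {F : L → L → C}

theorem leastInClass_le (x y : L) : leastInClass F x y ≤ x :=
  wellFounded_lt.min_le (s := {x' | F x' y = F x y}) rfl

theorem leastInClass_eq_iff {x x' y : L} :
    leastInClass F x y = leastInClass F x' y ↔ F x y = F x' y := by
  refine ⟨fun h => ?_, fun h => by simp only [leastInClass, h]⟩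
  have spec (z : L) : F (leastInClass F z y) y = F z y :=
    wellFounded_lt.min_mem {x' | F x' y = F z y} ⟨z, rfl⟩
  rw [← spec x, h, spec]

/-- The coloring of ordinals below `o` with the same color classes as the coloring `F` of a
well-order `L` of type `o`, but normal: the colors of the pairs with top point `β` are placed in
the interval `[β², β² + β)`. -/
noncomputable def squareColoring {o : Ordinal.{u}} (φ : L ≃o Iio o) (F : L → L → C)
    (ξ β : Ordinal.{u}) : Ordinal.{u} :=
  if h : ξ < o ∧ β < o then
    β * β + φ (leastInClass F (φ.symm ⟨ξ, mem_Iio.2 h.1⟩) (φ.symm ⟨β, mem_Iio.2 h.2⟩))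
  else 0

variable {o : Ordinal.{u}} (φ : L ≃o Iio o)

theorem squareColoring_apply (x y : L) :
    squareColoring φ F (φ x) (φ y) = φ y * φ y + φ (leastInClass F x y) := by
  rw [squareColoring, dif_pos ⟨(φ x).2, (φ y).2⟩]
  simp only [Subtype.coe_eta, OrderIso.symm_apply_apply]

theorem squareColoring_eq_iff {x x' y : L} :
    squareColoring φ F (φ x) (φ y) = squareColoring φ F (φ x') (φ y) ↔ F x y = F x' y := by
  rw [squareColoring_apply, squareColoring_apply, add_right_inj, Subtype.val_inj,
    φ.injective.eq_iff, leastInClass_eq_iff]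

theorem squareColoring_lt_mul_self {x y : L} (hxy : x < y) {β : Ordinal.{u}} (hβ : φ y < β) :
    squareColoring φ F (φ x) (φ y) < β * β := by
  rw [squareColoring_apply]
  exact mul_self_add_lt_mul_self (φ.strictMono ((leastInClass_le x y).trans_lt hxy)) hβ

theorem isNormalColoring_squareColoring : IsNormalColoring (squareColoring φ F) o := by
  have top_le {x y x' y' : L} (hxy : x < y)
      (h : squareColoring φ F (φ x) (φ y) = squareColoring φ F (φ x') (φ y')) : y' ≤ y := by
    by_contra! hlt
    refine ((squareColoring_lt_mul_self φ hxy (φ.strictMono hlt)).trans_le ?_).ne h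
    rw [squareColoring_apply]
    exact le_self_add
  intro α β γ δ hαβ hβ hγδ hδ h
  obtain ⟨x, rfl⟩ := exists_coe_apply_eq φ (hαβ.trans hβ)
  obtain ⟨y, rfl⟩ := exists_coe_apply_eq φ hβ
  obtain ⟨x', rfl⟩ := exists_coe_apply_eq φ (hγδ.trans hδ)
  obtain ⟨y', rfl⟩ := exists_coe_apply_eq φ hδ
  rw [(top_le (φ.lt_iff_lt.1 hγδ) h.symm).antisymm (top_le (φ.lt_iff_lt.1 hαβ) h)]

theorem oTypeLE_squareColoring {b : Ordinal.{u}} (hF : ∀ c y, typeLT {x | F x y = c} ≤ b)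
    {η β : Ordinal.{u}} (hη : η < β) (hβ : β < o) :
    OTypeLE {ξ | ξ < β ∧ squareColoring φ F ξ β = squareColoring φ F η β} b := by
  obtain ⟨x, rfl⟩ := exists_coe_apply_eq φ (hη.trans hβ)
  obtain ⟨y, rfl⟩ := exists_coe_apply_eq φ hβ
  obtain ⟨e⟩ := typeLT_le_iff.1 (hF (F x y) y)
  refine ⟨OrderEmbedding.ofStrictMono (fun ξ => e ⟨φ.symm ⟨ξ, ξ.2.1.trans hβ⟩, ?_⟩)
    fun ξ ξ' h => e.strictMono (φ.symm.strictMono h)⟩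
  rw [mem_ofPred_eq, ← squareColoring_eq_iff φ, OrderIso.apply_symm_apply]
  exact ξ.2.2

end SquareColoring

/-- The partition relation `μ →^poly (par(<cf μ))²_{<ρ-t-bdd}`. -/
def PolyParArrow (μ ρ : Cardinal.{u}) : Prop :=
  ∀ f : Ordinal.{u} → Ordinal.{u} → Ordinal.{u},
    (∀ α β : Ordinal, α < β → β < μ.ord → f α β < μ.ord) →
    IsNormalColoring f μ.ord → TypeBounded f μ.ord ρ.ord →
    ∃ γ : Ordinal.{u}, γ < (μ.ord.cof).ord ∧ ∃ g : Ordinal.{u} → Ordinal.{u},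
      (∀ ξ : Ordinal, ξ < μ.ord → g ξ < γ) ∧
      ∀ i : Ordinal, i < γ → IsRainbow f {ξ : Ordinal | ξ < μ.ord ∧ g ξ = i}

/-- A version of `PolyParArrow` that can be applied to arbitrary well-orders of type `μ` and to
colorings that are neither normal nor ordinal-valued: if all color classes have order type at most
`b`, then there is a partition into fewer than `cf μ` pieces that are rainbow up to normality. -/
def PolyPartition (μ : Cardinal.{u}) (b : Ordinal.{u}) : Prop :=
  ∀ (L : Type u) [LinearOrder L] [WellFoundedLT L] (C : Type (u + 1)) (F : L → L → C),
    typeLT L = μ.ord → (∀ c y, typeLT {x | F x y = c} ≤ b) →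
    ∃ ι : Type u, #ι < μ.ord.cof ∧ ∃ g : L → ι, ∀ i, IsEndRainbow F (g ⁻¹' {i})

theorem PolyParArrow.polyPartition {μ ρ : Cardinal.{u}} (hd : PolyParArrow μ ρ) (hμ : ℵ₀ ≤ μ)
    {b : Ordinal.{u}} (hb : b < ρ.ord) : PolyPartition μ b := by
  intro L _ _ C F hL hF
  obtain ⟨φ⟩ := nonempty_orderIso_Iio_of_typeLT_eq hL
  have lt_ord (α β : Ordinal) (hαβ : α < β) (hβ : β < μ.ord) :
      squareColoring φ F α β < μ.ord := by
    have hβ' : Order.succ β < μ.ord := (isSuccLimit_ord hμ).succ_lt hβ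
    obtain ⟨x, rfl⟩ := exists_coe_apply_eq φ (hαβ.trans hβ)
    obtain ⟨y, rfl⟩ := exists_coe_apply_eq φ hβ
    exact (squareColoring_lt_mul_self φ (φ.lt_iff_lt.1 hαβ) (Order.lt_succ _)).trans
      (isPrincipal_mul_ord hμ hβ' hβ')
  obtain ⟨γ, hγ, g, hg, hrb⟩ := hd _ lt_ord (isNormalColoring_squareColoring φ)
    ⟨b, hb, fun _ _ => oTypeLE_squareColoring φ hF⟩
  refine ⟨γ.ToType, by rwa [mk_toType, ← Cardinal.lt_ord],
    fun x => ToType.mk ⟨g (φ x), hg _ (φ x).2⟩, fun i x hx y hy z hz hxy hyz h => hxy.ne ?_⟩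
  have mem {t : L} (ht : ToType.mk ⟨g (φ t), hg _ (φ t).2⟩ = i) :
      (φ t : Ordinal) ∈ {ξ | ξ < μ.ord ∧ g ξ = i.toOrd} := ⟨(φ t).2, by simp [← ht]⟩
  have := hrb i.toOrd i.toOrd.2 _ (mem hx) _ (mem hz) _ (mem hy) _ (mem hz)
    (φ.strictMono (hxy.trans hyz)) (φ.strictMono hyz) ((squareColoring_eq_iff φ).2 h)
  exact φ.injective (Subtype.ext this.1)

theorem mk_sdiff_eq {α : Type u} {X U : Set α} (hX : ℵ₀ ≤ #X) (hU : #U < #X) :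
    #(X \ U : Set α) = #X := by
  refine (mk_le_mk_of_subset sdiff_subset).antisymm ?_
  by_contra! h
  exact ((le_mk_sdiff_add_mk X U).trans_lt (add_lt_of_lt hX h hU)).false

theorem mk_biUnion_le_mul {α ι : Type u} {S : Set ι} {s : ι → Set α} {c : Cardinal.{u}}
    (h : ∀ i ∈ S, #(s i) ≤ c) : #(⋃ i ∈ S, s i) ≤ #S * c :=
  (mk_biUnion_le s S).trans (mul_le_mul_right (ciSup_le' fun i : S => h i i.2) _)

theorem exists_free_subset {M : Type u} [LinearOrder M] [WellFoundedLT M] {X : Set M}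
    (hX : (#X).IsSingular) {τ : Cardinal.{u}} (hτ : τ < #X) (N : M → Set M)
    (hN : ∀ x, #(N x) ≤ τ) : ∃ Y ⊆ X, #Y = #X ∧ ∀ x ∈ Y, ∀ y ∈ Y, y < x → y ∉ N x := by
  obtain ⟨Y, hY, hfree⟩ := exists_free_set hX hτ (fun x : X => Subtype.val ⁻¹' N x)
    fun x => (mk_preimage_of_injective _ _ Subtype.val_injective).trans (hN x)
  refine ⟨Subtype.val '' Y, Subtype.coe_image_subset X Y,
    (mk_image_eq Subtype.val_injective).trans hY, ?_⟩
  rintro _ ⟨x, hx, rfl⟩ _ ⟨y, hy, rfl⟩ hyx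
  exact hfree x hx y hy hyx

theorem exists_frequently_eq {α ι : Type u} {l : Filter α} {c : Cardinal.{u}}
    [CardinalInterFilter l c] (hι : #ι < c) (g : α → ι) {p : α → Prop} (hp : ∃ᶠ x in l, p x) :
    ∃ i, ∃ᶠ x in l, p x ∧ g x = i := by
  by_contra! h
  refine hp (((Filter.eventually_cardinal_forall hι).2 h).mono fun x hx hpx => ?_)
  exact hx (g x) hpx rfl

theorem exists_mk_eq_forall_frequently {α β ι : Type u} {μ : Cardinal.{u}} (hα : #α = μ)
    (hμ : ℵ₀ ≤ μ) (hι : #ι < μ.ord.cof) {l : Filter β} [CardinalInterFilter l μ.ord.cof]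
    {S : Set β} (hS : ∃ᶠ x in l, x ∈ S) (g : α → S → ι) :
    ∃ i, ∃ E : Set α, #E = μ ∧ ∀ η ∈ E, ∃ᶠ x in l, ∃ hx : x ∈ S, g η ⟨x, hx⟩ = i := by
  classical
  obtain ⟨s₀, hs₀⟩ := hS.exists
  have exists_color (η : α) : ∃ i, ∃ᶠ x in l, ∃ hx : x ∈ S, g η ⟨x, hx⟩ = i := by
    obtain ⟨i, hi⟩ := exists_frequently_eq hι
      (fun x => if hx : x ∈ S then g η ⟨x, hx⟩ else g η ⟨s₀, hs₀⟩) hS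
    exact ⟨i, hi.mono fun x ⟨hx, hxi⟩ => ⟨hx, by rwa [dif_pos hx] at hxi⟩⟩
  choose n hn using exists_color
  obtain ⟨i, hi⟩ := infinite_pigeonhole n (hα ▸ hμ) (hα ▸ hι)
  exact ⟨i, n ⁻¹' {i}, hi.trans hα, fun η hη => hη ▸ hn η⟩

section Amalgamation

variable {M : Type u} {C : Type*} [LinearOrder M]

/-- `S` and `Y` do not interact: no pair meeting both `S` and `Y` shares its color with another
pair of `S ∪ Y` having the same top point, except possibly with one of the form `(t', y)` for a
pair `(t, y)`, where `t, t' ∈ S` and `y ∈ Y`. -/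
structure IsSeparated (F : M → M → C) (S Y : Set M) : Prop where
  ne_of_top_mem_left : ∀ ⦃t⦄, t ∈ S → ∀ ⦃t'⦄, t' ∈ S → ∀ ⦃y⦄, y ∈ Y → F y t ≠ F t' t
  ne_of_mem_right : ∀ ⦃t⦄, t ∈ S → ∀ ⦃y⦄, y ∈ Y → ∀ ⦃y'⦄, y' ∈ Y → y < y' → F y t ≠ F y' t
  ne_of_top_mem_right : ∀ ⦃t⦄, t ∈ S → ∀ ⦃y⦄, y ∈ Y → ∀ ⦃y'⦄, y' ∈ Y → y < y' → F t y' ≠ F y y'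

variable {F : M → M → C} {S Y T W : Set M}

theorem IsSeparated.mono (h : IsSeparated F S Y) (hT : T ⊆ S) (hW : W ⊆ Y) : IsSeparated F T W where
  ne_of_top_mem_left _ ht _ ht' _ hy := h.ne_of_top_mem_left (hT ht) (hT ht') (hW hy)
  ne_of_mem_right _ ht _ hy _ hy' := h.ne_of_mem_right (hT ht) (hW hy) (hW hy')
  ne_of_top_mem_right _ ht _ hy _ hy' := h.ne_of_top_mem_right (hT ht) (hW hy) (hW hy')

theorem IsEndRainbow.union (hT : IsEndRainbow F T) (hW : IsEndRainbow F W)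
    (hTW : IsSeparated F T W)
    (htop : ∀ ⦃w⦄, w ∈ W → ∀ ⦃t⦄, t ∈ T → ∀ ⦃t'⦄, t' ∈ T → t < t' → F t w ≠ F t' w) :
    IsEndRainbow F (T ∪ W) := by
  rintro x (hx | hx) y (hy | hy) z (hz | hz) hxy hyz
  · exact hT hx hy hz hxy hyz
  · exact htop hz hx hy hxy
  · exact (hTW.ne_of_top_mem_left hz hx hy).symm
  · exact hTW.ne_of_top_mem_right hx hy hz hyz
  · exact hTW.ne_of_top_mem_left hz hy hx
  · exact (hTW.ne_of_top_mem_right hy hx hz (hxy.trans hyz)).symm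
  · exact hTW.ne_of_mem_right hz hx hy hxy
  · exact hW hx hy hz hxy hyz

end Amalgamation

namespace PolyPartition

variable {μ : Cardinal.{u}} {b : Ordinal.{u}} {M : Type u} [LinearOrder M] [WellFoundedLT M]
  {C : Type (u + 1)} {F : M → M → C}

theorem exists_isEndRainbow_mk_eq (hP : PolyPartition μ b) (hμ : ℵ₀ ≤ μ) (hM : typeLT M = μ.ord)
    (hF : ∀ c y, typeLT {x | F x y = c} ≤ b) : ∃ X : Set M, #X = μ ∧ IsEndRainbow F X := by
  obtain ⟨ι, hι, g, hg⟩ := hP M C F hM hF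
  have hMμ : #M = μ := mk_eq_of_typeLT_eq_ord hM
  obtain ⟨i, hi⟩ := infinite_pigeonhole g (hMμ ▸ hμ) (by rwa [hMμ])
  exact ⟨_, hi.trans hMμ, hg i⟩

theorem card_lt (hP : PolyPartition μ b) (hμ : ℵ₀ ≤ μ) : b.card < μ := by
  by_contra! hb
  obtain ⟨X, hX, hXF⟩ := hP.exists_isEndRainbow_mk_eq hμ (type_toType μ.ord)
    (F := fun _ _ => PUnit.unit) fun _ _ =>
      (typeLT_le_of_strictMono (Subtype.strictMono_coe _)).trans
        ((type_toType _).trans_le (ord_le.2 hb))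
  have hinf : X.Infinite := infinite_coe_iff.1 (infinite_iff.2 (hμ.trans_eq hX.symm))
  obtain ⟨t, htX, ht⟩ := hinf.exists_subset_card_eq 3
  let e := t.orderEmbOfFin ht
  have he (k : Fin 3) : e k ∈ X := htX (t.orderEmbOfFin_mem ht k)
  exact hXF (he 0) (he 1) (he 2) (e.strictMono (by decide)) (e.strictMono (by decide)) rfl

theorem exists_isSeparated (hP : PolyPartition μ b) (hμ : μ.IsSingular) (hM : typeLT M = μ.ord)
    (hF : ∀ c y, typeLT {x | F x y = c} ≤ b) {S : Set M} (hS : #S < μ) :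
    ∃ Y : Set M, #Y = μ ∧ IsEndRainbow F Y ∧ IsSeparated F S Y := by
  have hμ0 := hμ.aleph0_le
  have hbμ : b.card < μ := hP.card_lt hμ0
  have mk_fiber (c : C) (y : M) : #{x | F x y = c} ≤ b.card := mk_le_card_of_typeLT_le (hF c y)
  obtain ⟨X, hX, hXF⟩ := hP.exists_isEndRainbow_mk_eq hμ0 hM hF
  let U : Set M := ⋃ t ∈ S, ⋃ t' ∈ S, {y | F y t = F t' t}
  have hU : #U < #X := hX ▸ (mk_biUnion_le_mul fun t _ => mk_biUnion_le_mul fun t' _ =>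
    mk_fiber (F t' t) t).trans_lt (mul_lt_of_lt hμ0 hS (mul_lt_of_lt hμ0 hS hbμ))
  have hXU : #(X \ U : Set M) = μ := (mk_sdiff_eq (hX ▸ hμ0) hU).trans hX
  let N (y' : M) : Set M := ⋃ t ∈ S, ({y | F y y' = F t y'} ∪ {y | F y t = F y' t})
  have hN (y' : M) : #(N y') ≤ #S * (b.card + b.card) := mk_biUnion_le_mul fun t _ =>
    (mk_union_le _ _).trans (add_le_add (mk_fiber _ _) (mk_fiber _ _))
  obtain ⟨Y, hYX, hY, hfree⟩ := exists_free_subset (hXU ▸ hμ)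
    (hXU ▸ mul_lt_of_lt hμ0 hS (add_lt_of_lt hμ0 hbμ hbμ)) N hN
  refine ⟨Y, hY.trans hXU, hXF.mono (hYX.trans sdiff_subset),
    fun t ht t' ht' y hy h => (hYX hy).2 ?_, fun t ht y hy y' hy' hlt h => hfree y' hy' y hy hlt ?_,
    fun t ht y hy y' hy' hlt h => hfree y' hy' y hy hlt ?_⟩
  · exact mem_iUnion₂_of_mem ht (mem_iUnion₂_of_mem ht' h)
  · exact mem_iUnion₂_of_mem ht (Or.inr h)
  · exact mem_iUnion₂_of_mem ht (Or.inl h.symm)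

end PolyPartition

namespace PolyPartition

variable {μ : Cardinal.{u}} {b : Ordinal.{u}} {M : Type u} [LinearOrder M] [WellFoundedLT M]
  {C : Type (u + 1)} {F : M → M → C}

/-- The coloring of `μ` many consecutive copies of `S` that consists, on each copy, of `F`, and
between copies of the colors `F t (e η)`, where the point `e η` represents the `η`-th copy. -/
def copiesColoring (F : M → M → C) (S : Set M) (e : M → M) (ξ β : M ×ₗ S) : M × C :=
  ((ofLex ξ).1, F (ofLex ξ).2 (if (ofLex ξ).1 = (ofLex β).1 then (ofLex β).2 else e (ofLex β).1))

theorem typeLT_copiesColoring_le (hF : ∀ c y, typeLT {x | F x y = c} ≤ b) (S : Set M) (e : M → M)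
    (c : M × C) (β : M ×ₗ S) : typeLT {ξ | copiesColoring F S e ξ β = c} ≤ b := by
  let z : M := if c.1 = (ofLex β).1 then (ofLex β).2 else e (ofLex β).1
  refine (typeLT_le_of_strictMono (β := {x | F x z = c.2})
    (f := fun ξ => ⟨(ofLex ξ.1).2, ?_⟩) ?_).trans (hF c.2 z)
  · obtain ⟨ξ, rfl⟩ := ξ
    rfl
  · rintro ⟨ξ, hξ⟩ ⟨ξ', hξ'⟩ h
    have hfst : (ofLex ξ).1 = (ofLex ξ').1 :=
      (congrArg Prod.fst hξ).trans (congrArg Prod.fst hξ').symm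
    exact ((Prod.Lex.lt_iff.1 h).resolve_left hfst.not_lt).2

-- Some piece `i` of a partition of the copies meets `μ` many of them frequently. Take `T` from the
-- first of these copies and for `W` the points representing the later ones.
theorem exists_amalgam (hP : PolyPartition μ b) (hμ : ℵ₀ ≤ μ) (hM : typeLT M = μ.ord)
    (hF : ∀ c y, typeLT {x | F x y = c} ≤ b) {l : Filter M} [CardinalInterFilter l μ.ord.cof]
    {S Y : Set M} (hS : ∃ᶠ x in l, x ∈ S) (hSμ : #S < μ) (hY : #Y = μ) :
    ∃ T ⊆ S, ∃ W ⊆ Y, (∃ᶠ x in l, x ∈ T) ∧ #W = μ ∧ IsEndRainbow F T ∧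
      ∀ ⦃w⦄, w ∈ W → ∀ ⦃t⦄, t ∈ T → ∀ ⦃t'⦄, t' ∈ T → t < t' → F t w ≠ F t' w := by
  have hMμ : #M = μ := mk_eq_of_typeLT_eq_ord hM
  obtain ⟨e⟩ : Nonempty (M ≃ Y) := Cardinal.eq.1 (hMμ.trans hY.symm)
  have : Nonempty S := nonempty_coe_sort.2 hS.exists
  obtain ⟨ι, hι, g, hg⟩ := hP (M ×ₗ S) (M × C) (copiesColoring F S fun η => e η)
    (typeLT_prodLex_eq_ord hμ hM hSμ) (typeLT_copiesColoring_le hF S _)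
  obtain ⟨i, E, hE, hiE⟩ :=
    exists_mk_eq_forall_frequently hMμ hμ hι hS fun η x => g (toLex (η, x))
  obtain ⟨η, hη⟩ : E.Nonempty := nonempty_coe_sort.1 (mk_ne_zero_iff.1
    (hE ▸ (aleph0_pos.trans_le hμ).ne'))
  refine ⟨{x | ∃ hx : x ∈ S, g (toLex (η, ⟨x, hx⟩)) = i}, fun x hx => hx.1,
    (fun η' => (e η' : M)) '' (E \ Iic η), image_subset_iff.2 fun η' _ => (e η').2, hiE η hη,
    ?_, ?_, ?_⟩
  · exact (mk_image_eq (f := fun η' => (e η' : M)) (Subtype.val_injective.comp e.injective)).trans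
      ((mk_sdiff_eq (hE ▸ hμ) (hE ▸ mk_Iic_lt_of_typeLT_eq_ord hμ hM η)).trans hE)
  · rintro x ⟨hx, hxi⟩ y ⟨hy, hyi⟩ z ⟨hz, hzi⟩ hxy hyz h
    refine hg i hxi hyi hzi ?_ ?_ (by simp [copiesColoring, h])
    · exact Prod.Lex.lt_iff.2 (Or.inr ⟨rfl, hxy⟩)
    · exact Prod.Lex.lt_iff.2 (Or.inr ⟨rfl, hyz⟩)
  · rintro _ ⟨η', ⟨hη', hlt⟩, rfl⟩ t ⟨ht, hti⟩ t' ⟨ht', ht'i⟩ htt' h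
    rw [mem_Iic, not_le] at hlt
    obtain ⟨x, hx, hxi⟩ := (hiE η' hη').exists
    refine hg i hti ht'i hxi ?_ ?_ (by simpa [copiesColoring, hlt.ne] using h)
    · exact Prod.Lex.lt_iff.2 (Or.inr ⟨rfl, htt'⟩)
    · exact Prod.Lex.lt_iff.2 (Or.inl hlt)

theorem exists_frequently_isEndRainbow (hP : PolyPartition μ b) (hμ : ℵ₀ ≤ μ)
    (hM : typeLT M = μ.ord) (hF : ∀ c y, typeLT {x | F x y = c} ≤ b) {l : Filter M} [l.NeBot]
    [CardinalInterFilter l μ.ord.cof] (hl : l ≤ Filter.atTop) {S : Set M} (hS : S ∈ l)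
    (hSμ : #S ≤ μ.ord.cof) :
    ∃ X : Set M, (∃ᶠ x in l, x ∈ X) ∧ #X = μ ∧ IsEndRainbow F X := by
  have hMμ : #M = μ := mk_eq_of_typeLT_eq_ord hM
  obtain hreg | hsing := isRegular_or_isSingular hμ
  · obtain ⟨ι, hι, g, hg⟩ := hP M C F hM hF
    obtain ⟨i, hi⟩ := exists_frequently_eq (l := l) hι g (p := fun _ => True)
      (Filter.Frequently.of_forall fun _ => trivial)
    have hcof : IsCofinal (g ⁻¹' {i}) := fun a =>
      let ⟨x, hx, hax⟩ := ((hi.and_eventually (hl (Filter.mem_atTop a)))).exists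
      ⟨x, hx.2, hax⟩
    refine ⟨g ⁻¹' {i}, hi.mono fun x hx => hx.2, ((mk_set_le _).trans_eq hMμ).antisymm ?_, hg i⟩
    calc μ = Order.cof M := by rw [← cof_type, hM, hreg.cof_ord]
      _ ≤ _ := Order.cof_le hcof
  · have hS' : #S < μ := hSμ.trans_lt hsing.cof_ord_lt
    obtain ⟨Y, hY, hYF, hSY⟩ := hP.exists_isSeparated hsing hM hF hS'
    obtain ⟨T, hTS, W, hWY, hT, hW, hTF, hTW⟩ := hP.exists_amalgam hμ hM hF
      (Filter.Eventually.frequently hS) hS' hY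
    refine ⟨T ∪ W, hT.mono fun x => Or.inl, ?_,
      hTF.union (hYF.mono hWY) (hSY.mono hTS hWY) hTW⟩
    exact ((mk_set_le _).trans_eq hMμ).antisymm (hW ▸ mk_le_mk_of_subset subset_union_right)

end PolyPartition

section Club

variable {α : Type*} [LinearOrder α] {s : Set α}

theorem isClub_Ici (x : α) : IsClub (Ici x) where
  dirSupClosed _ ht ht₀ _ _ hy := ht₀.elim fun _ hz => (ht hz).trans (hy.1 hz)
  isCofinal y := ⟨max x y, le_max_left x y, le_max_right x y⟩

theorem isCofinal_of_isStationary (hs : IsStationary s) : IsCofinal s :=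
  fun x => hs (isClub_Ici x)

variable [WellFoundedLT α]

theorem exists_isClub_mk_le [NoMaxOrder α] : ∃ C : Set α, IsClub C ∧ #C ≤ Order.cof α := by
  obtain ⟨D, hD, hDcof⟩ := Order.exists_cof_eq α
  refine ⟨{x | IsLUB (D ∩ Iic x) x}, ⟨fun t ht _ _ x hx => ?_, fun x => ?_⟩, ?_⟩
  · refine ⟨fun y hy => hy.2, fun u hu => hx.2 fun y hy => (ht hy).2 fun z hz => hu ?_⟩
    exact ⟨hz.1, hz.2.trans (hx.1 hy)⟩
  · obtain ⟨y, hy, hxy⟩ := hD x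
    exact ⟨y, ⟨fun z hz => hz.2, fun u hu => hu ⟨hy, le_rfl⟩⟩, hxy⟩
  · have above (x : α) : {y | y ∈ D ∧ x < y}.Nonempty := by
      obtain ⟨x', hx'⟩ := exists_gt x
      obtain ⟨y, hy, hxy⟩ := hD x'
      exact ⟨y, hy, hx'.trans_le hxy⟩
    let next (x : α) : α := wellFounded_lt.min _ (above x)
    have next_mem (x : α) : next x ∈ D ∧ x < next x := wellFounded_lt.min_mem _ (above x)
    have strictMono : StrictMonoOn next {x | IsLUB (D ∩ Iic x) x} := by
      intro x _ y hy hxy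
      obtain ⟨z, hz, hxz⟩ := (lt_isLUB_iff hy).1 hxy
      calc next x ≤ z := wellFounded_lt.min_le (s := {y | y ∈ D ∧ x < y}) ⟨hz.1, hxz⟩
        _ ≤ y := hz.2
        _ < next y := (next_mem y).2
    rw [← hDcof, ← mk_image_eq_of_injOn _ _ strictMono.injOn]
    refine mk_le_mk_of_subset ?_
    rintro _ ⟨x, -, rfl⟩
    exact (next_mem x).1

/-- The filter generated by the club subsets of `α`; the sets that are frequent with respect to it
are the stationary ones. -/
noncomputable def clubFilter (hα : ℵ₀ < Order.cof α) : Filter α :=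
  Filter.ofCardinalInter (c := Order.cof α) {s | ∃ C ⊆ s, IsClub C}
    (ofNat_lt_aleph0.trans hα)
    (fun S hS hSC => by
      choose! C hCs hC using hSC
      refine ⟨⋂₀ (C '' S), fun x hx s hs => hCs hs (hx _ (mem_image_of_mem C hs)), ?_⟩
      exact IsClub.sInter hα.ne' (mk_image_le.trans_lt hS) (forall_mem_image.2 fun s hs => hC hs))
    fun _ _ ⟨C, hC, hClub⟩ hst => ⟨C, hC.trans hst, hClub⟩

variable (hα : ℵ₀ < Order.cof α)

instance cardinalInterFilter_clubFilter : CardinalInterFilter (clubFilter hα) (Order.cof α) :=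
  Filter.cardinalInter_ofCardinalInter ..

theorem mem_clubFilter : s ∈ clubFilter hα ↔ ∃ C ⊆ s, IsClub C :=
  Iff.rfl

theorem mem_clubFilter_of_isClub (hs : IsClub s) : s ∈ clubFilter hα :=
  ⟨s, Subset.rfl, hs⟩

theorem clubFilter_le_atTop : clubFilter hα ≤ Filter.atTop :=
  le_iInf fun x => Filter.le_principal_iff.2 (mem_clubFilter_of_isClub hα (isClub_Ici x))

theorem frequently_mem_clubFilter : (∃ᶠ x in clubFilter hα, x ∈ s) ↔ IsStationary s := by
  simp only [Filter.frequently_iff, mem_clubFilter]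
  refine ⟨fun h C hC => ?_, fun h U ⟨C, hCU, hC⟩ => ?_⟩
  · obtain ⟨x, hx, hs⟩ := h ⟨C, Subset.rfl, hC⟩
    exact ⟨x, hs, hx⟩
  · obtain ⟨x, hs, hx⟩ := h hC
    exact ⟨x, hCU hx, hs⟩

end Club

section StationaryIn

variable {L : Type*} [LinearOrder L] {δ : Ordinal.{u}} (φ : L ≃o Iio δ)

theorem isClubIn_image {C : Set L} (hC : IsClub C) :
    IsClubIn ((fun x => (φ x : Ordinal)) '' C) δ := by
  refine ⟨image_subset_iff.2 fun x _ => (φ x).2, fun α hα => ?_, fun α hα hα0 hsup => ?_⟩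
  · obtain ⟨x, rfl⟩ := exists_coe_apply_eq φ hα
    obtain ⟨y, hy, hxy⟩ := hC.isCofinal x
    exact ⟨φ y, mem_image_of_mem _ hy, φ.monotone hxy⟩
  · obtain ⟨x, rfl⟩ := exists_coe_apply_eq φ hα
    refine ⟨x, hC.isLUB_mem (t := C ∩ Iio x) inter_subset_left ?_
      ⟨fun y hy => hy.2.le, fun z hz => ?_⟩, rfl⟩
    · by_contra! hempty
      refine hα0 (hsup.symm.trans ?_)
      refine (congrArg sSup ?_).trans csSup_empty
      rw [Set.eq_empty_iff_forall_notMem]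
      rintro _ ⟨⟨y, hy, rfl⟩, hyx⟩
      exact (hempty.subset ⟨hy, φ.lt_iff_lt.1 hyx⟩).elim
    · rw [← φ.le_iff_le, ← Subtype.coe_le_coe, ← hsup]
      refine csSup_le' ?_
      rintro _ ⟨⟨y, hy, rfl⟩, hyx⟩
      exact φ.monotone (hz ⟨hy, φ.lt_iff_lt.1 hyx⟩)

theorem isClub_preimage {C : Set Ordinal.{u}} (hC : IsClubIn C δ) :
    IsClub ((fun x => (φ x : Ordinal)) ⁻¹' C) where
  dirSupClosed t ht ht₀ _ x hx := by
    by_cases hxt : x ∈ t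
    · exact ht hxt
    have lt_of_mem {y : L} (hy : y ∈ t) : (φ y : Ordinal) < φ x :=
      φ.strictMono ((hx.1 hy).lt_of_ne (ne_of_mem_of_not_mem hy hxt))
    refine hC.2.2 _ (φ x).2 (ht₀.elim fun y hy => (zero_le.trans_lt (lt_of_mem hy)).ne') ?_
    refine (csSup_le' fun α hα => hα.2.le).antisymm (le_of_not_gt fun hlt => ?_)
    obtain ⟨z, hz⟩ := exists_coe_apply_eq φ (hlt.trans (φ x).2)
    rw [← hz] at hlt
    refine (φ.lt_iff_lt.1 hlt).not_ge (hx.2 fun y hy => φ.le_iff_le.1 (Subtype.coe_le_coe.1 ?_))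
    have hyC : (φ y : Ordinal) ∈ C ∩ Iio (φ x : Ordinal) := ⟨ht hy, lt_of_mem hy⟩
    exact (le_csSup (bddAbove_Iio.mono inter_subset_right) hyC).trans_eq hz.symm
  isCofinal x := by
    obtain ⟨_, hy, hxy⟩ := hC.2.1 _ (φ x).2
    obtain ⟨y, rfl⟩ := exists_coe_apply_eq φ (hC.1 hy)
    exact ⟨y, hy, φ.le_iff_le.1 hxy⟩

theorem isStationaryIn_iff {A : Set Ordinal.{u}} :
    IsStationaryIn A δ ↔ IsStationary ((fun x => (φ x : Ordinal)) ⁻¹' A) := by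
  refine ⟨fun h C hC => ?_, fun h C hC => ?_⟩
  · obtain ⟨_, hA, x, hx, rfl⟩ := h _ (isClubIn_image φ hC)
    exact ⟨x, hA, hx⟩
  · obtain ⟨x, hA, hx⟩ := h (isClub_preimage φ hC)
    exact ⟨φ x, hA, hx⟩

end StationaryIn

theorem hasOType_image {M : Type u} [LinearOrder M] [WellFoundedLT M] {μ : Cardinal.{u}}
    (hM : typeLT M = μ.ord) {a : M → Ordinal.{u}} (ha : StrictMono a) {X : Set M} (hX : #X = μ) :
    HasOType (a '' X) μ.ord := by
  have mk_Iio_lt (x : X) : #(Iio x) < μ :=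
    (mk_preimage_of_injective _ (Iio (x : M)) Subtype.val_injective).trans_lt
      (mk_Iio_lt_of_typeLT_eq_ord hM x)
  obtain ⟨φ⟩ := nonempty_orderIso_Iio_of_typeLT_eq (typeLT_eq_ord hX mk_Iio_lt)
  exact ⟨φ.symm.trans ((ha.strictMonoOn X).orderIso a X)⟩

theorem PolyPartition.exists_isStationary_isEndRainbow {μ : Cardinal.{u}} {b : Ordinal.{u}}
    (hP : PolyPartition μ b) (hμ : ℵ₀ < μ.ord.cof) {M L : Type u} [LinearOrder M] [WellFoundedLT M]
    [LinearOrder L] [WellFoundedLT L] (hM : typeLT M = μ.ord) {C : Type (u + 1)} {F : M → M → C}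
    (hF : ∀ c y, typeLT {x | F x y = c} ≤ b) {a : M → L} (ha : StrictMono a)
    (hst : IsStationary (range a)) :
    ∃ X : Set M, IsStationary (a '' X) ∧ #X = μ ∧ IsEndRainbow F X := by
  have hcofinal : IsCofinal (range a) := isCofinal_of_isStationary hst
  have hcof : Order.cof L = μ.ord.cof := by
    rw [← Order.cof_congr_of_strictMono ha hcofinal, ← cof_type, hM]
  have hL : ℵ₀ < Order.cof L := hcof ▸ hμ
  have : Nonempty L := hst.nonempty.to_type
  have : NoTopOrder L := Order.one_lt_cof_iff.1 (one_lt_aleph0.trans hL)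
  have : NoMaxOrder L := NoTopOrder.to_noMaxOrder L
  let l := Filter.comap a (clubFilter hL)
  have : l.NeBot := Filter.comap_neBot_iff_frequently.2 ((frequently_mem_clubFilter hL).2 hst)
  have : CardinalInterFilter l μ.ord.cof := hcof ▸ inferInstanceAs (CardinalInterFilter l _)
  have hl : l ≤ Filter.atTop := (Filter.comap_mono (clubFilter_le_atTop hL)).trans_eq
    (Filter.comap_embedding_atTop (fun _ _ => ha.le_iff_le) fun x => by simpa using hcofinal x)
  obtain ⟨D, hD, hDcof⟩ := exists_isClub_mk_le (α := L)
  obtain ⟨X, hX, hXμ, hXF⟩ := hP.exists_frequently_isEndRainbow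
    (hμ.le.trans (cof_ord_le μ)) hM hF hl
    (Filter.preimage_mem_comap (mem_clubFilter_of_isClub hL hD))
    ((mk_preimage_of_injective _ _ ha.injective).trans (hDcof.trans_eq hcof))
  refine ⟨X, ?_, hXμ, hXF⟩
  rw [Filter.frequently_comap] at hX
  exact (frequently_mem_clubFilter hL).1 (hX.mono fun y ⟨x, hxy, hx⟩ => ⟨x, hx, hxy⟩)

/-- The coloring `f`, pulled back along `a` and made injective in `x` on the pairs with `y ≤ x`, so
that these do not enlarge the color classes to which `PolyPartition` is applied. -/
def pullbackColoring {M : Type u} [LinearOrder M] (f : Ordinal.{u} → Ordinal.{u} → Ordinal.{u})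
    (a : M → Ordinal.{u}) (x y : M) : Ordinal.{u} ⊕ M :=
  if x < y then Sum.inl (f (a x) (a y)) else Sum.inr x

section Pullback

variable {M : Type u} [LinearOrder M] {f : Ordinal.{u} → Ordinal.{u} → Ordinal.{u}}
  {A : Set Ordinal.{u}} {a : M → Ordinal.{u}}

theorem pullbackColoring_eq_inl_iff {x y : M} {ξ : Ordinal.{u}} :
    pullbackColoring f a x y = Sum.inl ξ ↔ x < y ∧ f (a x) (a y) = ξ := by
  unfold pullbackColoring
  split_ifs with h <;> simp [h]

theorem eq_of_pullbackColoring_eq_inr {x y z : M} (h : pullbackColoring f a x y = Sum.inr z) :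
    x = z := by
  unfold pullbackColoring at h
  split_ifs at h
  exact Sum.inr_injective h

theorem typeLT_pullbackColoring_le [WellFoundedLT M] (ha : StrictMono a) (haA : ∀ x, a x ∈ A)
    {b : Ordinal.{u}} (hb : 0 < b)
    (hf : ∀ η ∈ A, ∀ β ∈ A, η < β → OTypeLE {ξ | ξ ∈ A ∧ ξ < β ∧ f ξ β = f η β} b)
    (c : Ordinal.{u} ⊕ M) (y : M) : typeLT {x | pullbackColoring f a x y = c} ≤ b := by
  obtain hempty | ⟨z, hz⟩ := isEmpty_or_nonempty {x | pullbackColoring f a x y = c}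
  · rw [type_eq_zero_of_empty]
    exact zero_le
  obtain ξ | w := c
  · obtain ⟨hzy, rfl⟩ := pullbackColoring_eq_inl_iff.1 hz
    obtain ⟨e⟩ := hf _ (haA z) _ (haA y) (ha hzy)
    refine typeLT_le_iff.2 ⟨OrderEmbedding.ofStrictMono (fun x => e ⟨a x, haA x, ?_⟩)
      fun x x' h => e.strictMono (ha h)⟩
    exact (pullbackColoring_eq_inl_iff.1 x.2).imp_left (ha ·)
  · refine typeLT_le_iff.2 ⟨OrderEmbedding.ofStrictMono (fun _ => ⟨0, hb⟩) fun x x' h => ?_⟩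
    refine (h.ne (Subtype.ext ?_)).elim
    rw [eq_of_pullbackColoring_eq_inr x.2, eq_of_pullbackColoring_eq_inr x'.2]

theorem IsEndRainbow.isRainbow_image {κ : Ordinal.{u}} (hf : IsNormalColoring f κ)
    (ha : StrictMono a) (haκ : ∀ x, a x < κ) {X : Set M}
    (hX : IsEndRainbow (pullbackColoring f a) X) : IsRainbow f (a '' X) := by
  rintro _ ⟨x, hx, rfl⟩ _ ⟨y, hy, rfl⟩ _ ⟨z, hz, rfl⟩ _ ⟨w, hw, rfl⟩ hxy hzw h
  obtain rfl : y = w := ha.injective (hf _ _ _ _ hxy (haκ y) hzw (haκ w) h)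
  rw [ha.lt_iff_lt] at hxy hzw
  have heq : pullbackColoring f a x y = pullbackColoring f a z y := by
    simp only [pullbackColoring, if_pos hxy, if_pos hzw, h]
  refine ⟨congrArg a ?_, rfl⟩
  by_contra hne
  obtain hlt | hlt := lt_or_gt_of_ne hne
  · exact hX hx hz hy hlt hzw heq
  · exact hX hz hx hy hlt hxy heq.symm

end Pullback

theorem exists_strictMono_range_eq {M : Type u} [LinearOrder M] [NoMaxOrder M]
    {A : Set Ordinal.{u}} (e : M ≃o A) (hA : BddAbove A) :
    ∃ j : M → (sSup A).ToType, StrictMono j ∧ range (fun x => ((j x).toOrd : Ordinal)) = A := by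
  have lt_sSup (x : M) : (e x : Ordinal) < sSup A :=
    (exists_gt x).elim fun y hy =>
      (Subtype.coe_lt_coe.2 (e.strictMono hy)).trans_le (le_csSup hA (e y).2)
  refine ⟨fun x => ToType.mk ⟨e x, lt_sSup x⟩, fun x y h => ToType.mk.strictMono (e.strictMono h),
    ?_⟩
  simp only [ToType.toOrd, OrderIso.symm_apply_apply]
  exact (range_comp Subtype.val e).trans (by simp)

theorem sSup_eq_of_isStationaryIn {A B : Set Ordinal.{u}} (hBA : B ⊆ A) (hA : A ⊆ Iio (sSup A))
    (hB : IsStationaryIn B (sSup A)) : sSup B = sSup A := by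
  have hbdd : BddAbove A := bddAbove_Iio.mono hA
  refine (csSup_le_csSup' hbdd hBA).antisymm (csSup_le' fun ξ hξ => ?_)
  let φ : (sSup A).ToType ≃o Iio (sSup A) := ToType.mk.symm
  obtain ⟨x, hx⟩ := exists_coe_apply_eq φ (hA hξ)
  obtain ⟨y, hy, hxy⟩ := isCofinal_of_isStationary ((isStationaryIn_iff φ).1 hB) x
  calc ξ = φ x := hx.symm
    _ ≤ φ y := φ.monotone hxy
    _ ≤ sSup B := le_csSup (hbdd.mono hBA) hy

theorem PolyPartition.exists_isRainbow {μ : Cardinal.{u}} {b : Ordinal.{u}}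
    (hP : PolyPartition μ b) (hμ : ℵ₀ < μ.ord.cof) {f : Ordinal.{u} → Ordinal.{u} → Ordinal.{u}}
    {κ : Ordinal.{u}} (hfn : IsNormalColoring f κ) {A : Set Ordinal.{u}} (hAκ : A ⊆ Iio κ)
    (hA : HasOType A μ.ord) (hst : IsStationaryIn A (sSup A))
    (hf : ∀ η ∈ A, ∀ β ∈ A, η < β → OTypeLE {ξ | ξ ∈ A ∧ ξ < β ∧ f ξ β = f η β} b) :
    ∃ B ⊆ A, HasOType B μ.ord ∧ IsStationaryIn B (sSup B) ∧ IsRainbow f B := by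
  have hμ0 : ℵ₀ ≤ μ := hμ.le.trans (cof_ord_le μ)
  have : NoMaxOrder μ.ord.ToType := noMaxOrder hμ0
  obtain ⟨j, hj, hjA⟩ :=
    exists_strictMono_range_eq (ToType.mk.symm.trans hA.some) (bddAbove_Iio.mono hAκ)
  let a (x : μ.ord.ToType) : Ordinal := (j x).toOrd
  have ha : StrictMono a := ToType.mk.symm.strictMono.comp hj
  have haA (x) : a x ∈ A := hjA.subset (mem_range_self x)
  have hAδ : A ⊆ Iio (sSup A) := hjA.symm.subset.trans (range_subset_iff.2 fun x => (j x).toOrd.2)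
  have hjst : IsStationary (range j) := by
    refine ((isStationaryIn_iff ToType.mk.symm).1 hst).mono fun y hy => ?_
    obtain ⟨x, hx⟩ := hjA.symm.subset hy
    exact ⟨x, ToType.mk.symm.injective (Subtype.ext hx)⟩
  have hb : 0 < b := by
    obtain ⟨x⟩ : Nonempty μ.ord.ToType := by simpa using (aleph0_pos.trans_le hμ0).ne'
    obtain ⟨y, hxy⟩ := exists_gt x
    obtain ⟨i⟩ := hf _ (haA x) _ (haA y) (ha hxy)
    exact zero_le.trans_lt (i ⟨a x, haA x, ha hxy, rfl⟩).2
  obtain ⟨X, hX, hXμ, hXF⟩ := hP.exists_isStationary_isEndRainbow hμ (type_toType _)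
    (typeLT_pullbackColoring_le ha haA hb hf) hj hjst
  have hXA : a '' X ⊆ A := image_subset_iff.2 fun x _ => haA x
  have hXst : IsStationaryIn (a '' X) (sSup A) := by
    refine (isStationaryIn_iff ToType.mk.symm).2 (hX.mono ?_)
    rintro _ ⟨x, hx, rfl⟩
    exact ⟨x, hx, rfl⟩
  refine ⟨a '' X, hXA, hasOType_image (type_toType _) ha hXμ, ?_,
    hXF.isRainbow_image hfn ha fun x => hAκ (haA x)⟩
  rwa [sSup_eq_of_isStationaryIn hXA hAδ hXst]

theorem oTypeLE_iff {S : Set Ordinal.{u}} {γ : Ordinal.{u}} :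
    OTypeLE S γ ↔ ∃ h : Ordinal.{u} → Ordinal.{u}, StrictMonoOn h S ∧ MapsTo h S (Iio γ) := by
  refine ⟨fun ⟨e⟩ => ⟨Function.extend (↑) (fun x => (e x : Ordinal)) 0, ?_, ?_⟩,
    fun ⟨h, hmono, hmaps⟩ => ⟨OrderEmbedding.ofStrictMono (fun x => ⟨h x, hmaps x.2⟩)
      fun x y hxy => hmono x.2 y.2 hxy⟩⟩
  · intro x hx y hy hxy
    lift x to S using hx
    lift y to S using hy
    simp only [Subtype.val_injective.extend_apply]
    exact e.strictMono hxy
  · intro x hx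
    lift x to S using hx
    rw [Subtype.val_injective.extend_apply]
    exact (e x).2

theorem exists_injOn_mapsTo_Iio_ord {γ : Ordinal.{u}} {lam : Cardinal.{u}} (h : γ.card ≤ lam) :
    ∃ j : Ordinal.{u} → Ordinal.{u}, InjOn j (Iio γ) ∧ MapsTo j (Iio γ) (Iio lam.ord) := by
  obtain ⟨e⟩ : #(Iio γ) ≤ #(Iio lam.ord) := by
    simpa only [Cardinal.mk_Iio_ordinal, card_ord, Cardinal.lift_le] using h
  refine ⟨Function.extend (↑) (fun x => (e x : Ordinal)) 0, ?_, ?_⟩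
  · intro x hx y hy hxy
    lift x to Iio γ using hx
    lift y to Iio γ using hy
    simp only [Subtype.val_injective.extend_apply] at hxy
    exact congrArg Subtype.val (e.injective (Subtype.ext hxy))
  · intro x hx
    lift x to Iio γ using hx
    rw [Subtype.val_injective.extend_apply]
    exact (e x).2

theorem exists_lt_ord_oTypeLE {B : Set Ordinal.{u}} {ρ : Cardinal.{u}}
    (hB : #B < Cardinal.lift.{u + 1} ρ) : ∃ b < ρ.ord, OTypeLE B b := by
  have htype : typeLT B < Ordinal.lift.{u + 1} ρ.ord := by
    rwa [lift_ord, Cardinal.lt_ord, card_type]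
  obtain ⟨b, hbρ, hb⟩ := lt_lift_iff.1 htype
  refine ⟨b, hbρ, ?_⟩
  rw [← type_lt_Iio, type_eq] at hb
  exact hb.map fun e => (OrderIso.ofRelIsoLT e.symm).toOrderEmbedding

/-- The partition relation `κ → (μ-st)²_{λ,<ρ}`, for an arbitrary ordinal `κ`. -/
def StationaryArrow (κ : Ordinal.{u}) (lam μ ρ : Cardinal.{u}) : Prop :=
  ∀ f : Ordinal.{u} → Ordinal.{u} → Ordinal.{u},
    (∀ α β : Ordinal, α < β → β < κ → f α β < lam.ord) →
    ∃ A : Set Ordinal.{u}, A ⊆ Iio κ ∧ HasOType A μ.ord ∧ IsStationaryIn A (sSup A) ∧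
      #{ξ : Ordinal.{u} | ∃ α ∈ A, ∃ β ∈ A, α < β ∧ f α β = ξ} < Cardinal.lift.{u + 1} ρ

theorem StationaryArrow.exists_typeBoundedOn {κ : Ordinal.{u}} {lam μ ρ : Cardinal.{u}}
    (hb : StationaryArrow κ lam μ ρ) {f : Ordinal.{u} → Ordinal.{u} → Ordinal.{u}}
    (hf : TypeBounded f κ (Order.succ lam).ord) :
    ∃ A ⊆ Iio κ, HasOType A μ.ord ∧ IsStationaryIn A (sSup A) ∧ TypeBoundedOn f A ρ.ord := by
  obtain ⟨γ, hγ, hclass⟩ := hf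
  let colorClass (η β : Ordinal) : Set Ordinal := {ξ | ξ < β ∧ f ξ β = f η β}
  have (S : Set Ordinal.{u}) (hS : OTypeLE S γ) := oTypeLE_iff.1 hS
  choose! h hmono hmaps using this
  let position (ξ β : Ordinal) : Ordinal := h (colorClass ξ β) ξ
  have position_lt {ξ β : Ordinal} (hξ : ξ < β) (hβ : β < κ) : position ξ β < γ :=
    hmaps _ (hclass ξ β hξ hβ) ⟨hξ, rfl⟩
  obtain ⟨j, hj, hjlam⟩ := exists_injOn_mapsTo_Iio_ord (Order.lt_succ_iff.1 (lt_ord.1 hγ))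
  obtain ⟨A, hAκ, hA, hst, hAρ⟩ := hb (fun ξ β => j (position ξ β))
    fun ξ β hξ hβ => hjlam (position_lt hξ hβ)
  let P : Set Ordinal := {π | ∃ ξ ∈ A, ∃ β ∈ A, ξ < β ∧ position ξ β = π}
  have hPγ : P ⊆ Iio γ := by
    rintro _ ⟨ξ, -, β, hβ, hξβ, rfl⟩
    exact position_lt hξβ (hAκ hβ)
  have hPρ : #P < Cardinal.lift.{u + 1} ρ := by
    rw [← mk_image_eq_of_injOn j P (hj.mono hPγ)]
    refine (mk_le_mk_of_subset ?_).trans_lt hAρ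
    rintro _ ⟨_, ⟨ξ, hξ, β, hβ, hξβ, rfl⟩, rfl⟩
    exact ⟨ξ, hξ, β, hβ, hξβ, rfl⟩
  obtain ⟨b, hbρ, ⟨e⟩⟩ := exists_lt_ord_oTypeLE hPρ
  refine ⟨A, hAκ, hA, hst, b, hbρ, fun η _ β hβ hηβ => ?_⟩
  have position_eq {ξ : Ordinal} (hξ : f ξ β = f η β) : position ξ β = h (colorClass η β) ξ := by
    simp only [position, colorClass, hξ]
  refine ⟨OrderEmbedding.ofStrictMono (fun ξ => e ⟨h (colorClass η β) ξ, ?_⟩) fun ξ ξ' hlt => ?_⟩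
  · exact ⟨ξ, ξ.2.1, β, hβ, ξ.2.2.1, position_eq ξ.2.2.2⟩
  · exact e.strictMono (hmono _ (hclass η β hηβ (hAκ hβ)) ξ.2.2 ξ'.2.2 hlt)

theorem stmt6_general {κ : Ordinal.{u}} {lam μ ρ : Cardinal.{u}} (hμ : ℵ₀ < μ.ord.cof)
    (hb : StationaryArrow κ lam μ ρ) (hd : PolyParArrow μ ρ)
    {f : Ordinal.{u} → Ordinal.{u} → Ordinal.{u}} (hfn : IsNormalColoring f κ)
    (hft : TypeBounded f κ (Order.succ lam).ord) :
    ∃ A : Set Ordinal.{u}, A ⊆ Iio κ ∧ HasOType A μ.ord ∧ IsStationaryIn A (sSup A) ∧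
      IsRainbow f A := by
  obtain ⟨A, hAκ, hA, hst, b, hbρ, hfA⟩ := hb.exists_typeBoundedOn hft
  have hP : PolyPartition μ b := hd.polyPartition (hμ.le.trans (cof_ord_le μ)) hbρ
  obtain ⟨B, hBA, hB⟩ := hP.exists_isRainbow hμ hfn hAκ hA hst hfA
  exact ⟨B, hBA.trans hAκ, hB⟩

/-- Proposition (clmcc)(2): if `κ → (μ-st)²_{λ,<ρ}` and
`μ →^poly (par(<cf μ))²_{<ρ-t-bdd}`, then `κ →^poly (μ-st)²_{<λ⁺-t-bdd}`.
Here `κ, λ, μ` have uncountable cofinality. -/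
theorem stmt6 (κ lam μ ρ : Cardinal.{0})
    (hκ : ℵ₀ < κ.ord.cof) (hlam : ℵ₀ < lam.ord.cof) (hμ : ℵ₀ < μ.ord.cof)
    (hb : ∀ f : Ordinal.{0} → Ordinal.{0} → Ordinal.{0},
      (∀ α β : Ordinal, α < β → β < κ.ord → f α β < lam.ord) →
      ∃ A : Set Ordinal.{0}, A ⊆ Set.Iio κ.ord ∧ HasOType A μ.ord ∧
        IsStationaryIn A (sSup A) ∧
        Cardinal.mk ↥{ξ : Ordinal.{0} | ∃ α ∈ A, ∃ β ∈ A, α < β ∧ f α β = ξ} <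
          Cardinal.lift.{1, 0} ρ)
    (hd : ∀ f : Ordinal.{0} → Ordinal.{0} → Ordinal.{0},
      (∀ α β : Ordinal, α < β → β < μ.ord → f α β < μ.ord) →
      IsNormalColoring f μ.ord → TypeBounded f μ.ord ρ.ord →
      ∃ γ : Ordinal.{0}, γ < (μ.ord.cof).ord ∧ ∃ g : Ordinal.{0} → Ordinal.{0},
        (∀ ξ : Ordinal, ξ < μ.ord → g ξ < γ) ∧
        ∀ i : Ordinal, i < γ → IsRainbow f {ξ : Ordinal | ξ < μ.ord ∧ g ξ = i}) :
    ∀ f : Ordinal.{0} → Ordinal.{0} → Ordinal.{0},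
      (∀ α β : Ordinal, α < β → β < κ.ord → f α β < κ.ord) →
      IsNormalColoring f κ.ord → TypeBounded f κ.ord (Order.succ lam).ord →
      ∃ A : Set Ordinal.{0}, A ⊆ Set.Iio κ.ord ∧ HasOType A μ.ord ∧
        IsStationaryIn A (sSup A) ∧ IsRainbow f A := by
  intro f _ hfn hft
  exact stmt6_general hμ hb hd hfn hft
end
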